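/- arXiv:0708.1922 — 4 statements merged into one kernel-verified Lean document; each statement's English description precedes it below -/
import Mathlib

section
/- Let A, B be positive differentiable functions of t with A(0) = A_0 > 0, B(0) = B_0 > 0 solving the reduced SL(2,ℝ) negative cross curvature flow system dA/dt = -2A^3/B^4, dB/dt = 2(3A^2 + 4AB)/B^3 (the case B = C). Then A is decreasing, B is increasing, the solution exists on all of [0, ∞), and for all t ≥ 0: A(t) ≥ (4 B_0^{-4} t + A_0^{-2})^{-1/2} and B(t) ≤ (C_1 t + B_0^3)^{1/3}, where C_1 = 24 A_0 + 18 A_0^2 B_0^{-1}. -/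
/-!
Along a solution `A' < 0 < B'`, so `A ≤ A₀` and `B ≥ B₀`. Hence `(A⁻²)' = 4 / B⁴ ≤ 4 / B₀⁴` and
`(B³)' = 24 A + 18 A² / B ≤ 24 A₀ + 18 A₀² / B₀`, and integrating gives both estimates on the whole
interval of existence. On a bounded interval `[0, T)` these estimates make the monotone functions
`A` and `B` converge to positive limits as `t → T⁻`, so the curve `(A, B)` stays in a region where
the vector field is smooth and can be continued past `T` by the Picard–Lindelöf theorem. A maximal
solution therefore has infinite lifespan.
-/

/-- A pair of functions solves the reduced (`B = C`) `SL(2,ℝ)` negative cross curvature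
flow system `A' = -2A³/B⁴`, `B' = 2(3A² + 4AB)/B³` (with positivity) on a set `s ⊆ ℝ`. -/
def IsSolSL2Red (A B : ℝ → ℝ) (s : Set ℝ) : Prop :=
  ∀ t ∈ s,
    (0 < A t ∧ 0 < B t) ∧
    HasDerivAt A (-2 * A t ^ 3 / B t ^ 4) t ∧
    HasDerivAt B (2 * (3 * A t ^ 2 + 4 * A t * B t) / B t ^ 3) t

/-- A maximal solution of the reduced `SL(2,ℝ)` system on `{t | 0 ≤ t, t < T}`
(`T ∈ (0,∞]` an extended real): a solution admitting no extension to a strictly larger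
interval. -/
def IsMaxSolSL2Red (A B : ℝ → ℝ) (T : EReal) : Prop :=
  IsSolSL2Red A B {t : ℝ | 0 ≤ t ∧ (t : EReal) < T} ∧
  ∀ (A' B' : ℝ → ℝ) (T' : EReal), T < T' →
    IsSolSL2Red A' B' {t : ℝ | 0 ≤ t ∧ (t : EReal) < T'} →
    ¬ (∀ t : ℝ, 0 ≤ t → (t : EReal) < T → A' t = A t ∧ B' t = B t)

open Set Filter Topology

section Monotone

variable {α β : Type*} [LinearOrder α] [TopologicalSpace α] [OrderTopology α] [DenselyOrdered α]
  [ConditionallyCompleteLinearOrder β] [TopologicalSpace β] [OrderTopology β]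
  {f : α → β} {a b : α} {c : β}

theorem exists_mem_Icc_tendsto_nhdsLT_of_monotoneOn (hab : a < b) (hf : MonotoneOn f (Ico a b))
    (hc : ∀ t ∈ Ico a b, f t ≤ c) : ∃ l ∈ Icc (f a) c, Tendsto f (𝓝[<] b) (𝓝 l) := by
  have hlim := (hf.mono Ioo_subset_Ico_self).tendsto_nhdsWithin_Ioo_left (nonempty_Ioo.2 hab)
    ⟨c, forall_mem_image.2 fun t ht => hc t (Ioo_subset_Ico_self ht)⟩
  have hIco : Ico a b ∈ 𝓝[<] b := Ico_mem_nhdsLT hab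
  have : (𝓝[<] b).NeBot := nhdsLT_neBot_of_exists_lt ⟨a, hab⟩
  refine ⟨_, ⟨ge_of_tendsto hlim ?_, le_of_tendsto hlim ?_⟩, hlim⟩
  · filter_upwards [hIco] with t ht using hf (left_mem_Ico.2 hab) ht ht.1
  · filter_upwards [hIco] with t ht using hc t ht

theorem exists_mem_Icc_tendsto_nhdsLT_of_antitoneOn (hab : a < b) (hf : AntitoneOn f (Ico a b))
    (hc : ∀ t ∈ Ico a b, c ≤ f t) : ∃ l ∈ Icc c (f a), Tendsto f (𝓝[<] b) (𝓝 l) := by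
  obtain ⟨l, hl, hlim⟩ :=
    exists_mem_Icc_tendsto_nhdsLT_of_monotoneOn (β := βᵒᵈ) hab hf.dual_right hc
  exact ⟨l, hl.symm, hlim⟩

end Monotone

theorem sub_le_mul_sub_of_hasDerivAt_le {f f' : ℝ → ℝ} {a b c : ℝ} (hab : a ≤ b)
    (hf : ∀ t ∈ Icc a b, HasDerivAt f (f' t) t) (hc : ∀ t ∈ Icc a b, f' t ≤ c) :
    f b - f a ≤ c * (b - a) := by
  refine (convex_Icc a b).image_sub_le_mul_sub_of_deriv_le (HasDerivAt.continuousOn hf)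
    (fun t ht => (hf t (interior_subset ht)).differentiableAt.differentiableWithinAt)
    (fun t ht => ?_) a (left_mem_Icc.2 hab) b (right_mem_Icc.2 hab) hab
  rw [(hf t (interior_subset ht)).deriv]
  exact hc t (interior_subset ht)

section Continuation

variable {E : Type*} [NormedAddCommGroup E] [NormedSpace ℝ E]

theorem hasDerivAt_piecewise_Iio {f f' g : ℝ → E} {e : E} {T : ℝ}
    (hf : ∀ᶠ t in 𝓝[<] T, HasDerivAt f (f' t) t) (hlim : Tendsto f (𝓝[<] T) (𝓝 (g T)))
    (hlim' : Tendsto f' (𝓝[<] T) (𝓝 e)) (hg : HasDerivWithinAt g e (Ici T) T) :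
    HasDerivAt ((Iio T).piecewise f g) e T := by
  set F := (Iio T).piecewise f g
  have hFf : EqOn F f (Iio T) := piecewise_eqOn _ _ _
  have hFg : EqOn F g (Ici T) := fun t ht => piecewise_eq_of_notMem _ _ _ (notMem_Iio.2 ht)
  have hF : ∀ᶠ t in 𝓝[<] T, HasDerivAt F (f' t) t := by
    filter_upwards [hf, self_mem_nhdsWithin] with t hft ht
    exact hft.congr_of_eventuallyEq (hFf.eventuallyEq_of_mem (Iio_mem_nhds ht))
  have hFlim : ContinuousWithinAt F (Iio T) T := by
    rw [ContinuousWithinAt, hFg self_mem_Ici]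
    exact hlim.congr' (hFf.symm.eventuallyEq_of_mem self_mem_nhdsWithin)
  have hleft : HasDerivWithinAt F e (Iic T) T :=
    hasDerivWithinAt_Iic_of_tendsto_deriv (s := Iio T ∩ {t | HasDerivAt F (f' t) t})
      (fun t ht => ht.2.differentiableAt.differentiableWithinAt)
      (hFlim.mono inter_subset_left) (inter_mem self_mem_nhdsWithin hF)
      (hlim'.congr' (hF.mono fun t ht => ht.deriv.symm))
  have hright : HasDerivWithinAt F e (Ici T) T := hg.congr hFg (hFg self_mem_Ici)
  simpa only [Iic_union_Ici, hasDerivWithinAt_univ] using hleft.union hright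

variable [CompleteSpace E] {v : E → E} {U : Set E} {x : E}

theorem exists_forall_mem_Ico_mem_and_hasDerivAt (hv : ContDiffAt ℝ 1 v x) (hU : U ∈ 𝓝 x)
    (T : ℝ) :
    ∃ γ : ℝ → E, γ T = x ∧ ∃ T' > T, ∀ t ∈ Ico T T', γ t ∈ U ∧ HasDerivAt γ (v (γ t)) t := by
  obtain ⟨γ, rfl, ε, hε, hγ⟩ :=
    hv.exists_forall_mem_closedBall_exists_eq_forall_mem_Ioo_hasDerivAt₀ T
  have hIoo : Ioo (T - ε) (T + ε) ∈ 𝓝 T := Ioo_mem_nhds (by linarith) (by linarith)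
  have hγU : ∀ᶠ t in 𝓝 T, γ t ∈ U := (hγ T (mem_of_mem_nhds hIoo)).continuousAt hU
  have hsol : ∀ᶠ t in 𝓝[≥] T, γ t ∈ U ∧ HasDerivAt γ (v (γ t)) t :=
    nhdsWithin_le_nhds (hγU.and (mem_of_superset hIoo hγ))
  obtain ⟨T', hT', hsub⟩ := mem_nhdsGE_iff_exists_Ico_subset.1 hsol
  exact ⟨γ, rfl, T', hT', hsub⟩

theorem exists_continuation_of_tendsto_nhdsLT {γ : ℝ → E} {t₀ T : ℝ} (hT : t₀ < T)
    (hγ : ∀ t ∈ Ico t₀ T, γ t ∈ U ∧ HasDerivAt γ (v (γ t)) t)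
    (hlim : Tendsto γ (𝓝[<] T) (𝓝 x)) (hv : ContDiffAt ℝ 1 v x) (hU : U ∈ 𝓝 x) :
    ∃ γ' : ℝ → E, EqOn γ' γ (Iio T) ∧
      ∃ T' > T, ∀ t ∈ Ico t₀ T', γ' t ∈ U ∧ HasDerivAt γ' (v (γ' t)) t := by
  obtain ⟨η, hηT, T', hT', hη⟩ := exists_forall_mem_Ico_mem_and_hasDerivAt hv hU T
  set Γ := (Iio T).piecewise γ η
  have hΓγ : EqOn Γ γ (Iio T) := piecewise_eqOn _ _ _
  have hΓη : EqOn Γ η (Ici T) := fun t ht => piecewise_eq_of_notMem _ _ _ (notMem_Iio.2 ht)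
  refine ⟨Γ, hΓγ, T', hT', fun t ht => ?_⟩
  rcases lt_trichotomy t T with hlt | rfl | hgt
  · rw [hΓγ hlt]
    obtain ⟨hmem, hderiv⟩ := hγ t ⟨ht.1, hlt⟩
    exact ⟨hmem, hderiv.congr_of_eventuallyEq (hΓγ.eventuallyEq_of_mem (Iio_mem_nhds hlt))⟩
  · rw [hΓη self_mem_Ici]
    obtain ⟨hmem, hderiv⟩ := hη t (left_mem_Ico.2 hT')
    refine ⟨hmem, hasDerivAt_piecewise_Iio (f' := fun s => v (γ s)) ?_ (hηT ▸ hlim) ?_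
      hderiv.hasDerivWithinAt⟩
    · filter_upwards [Ico_mem_nhdsLT hT] with s hs using (hγ s hs).2
    · rw [hηT]
      exact hv.continuousAt.tendsto.comp hlim
  · rw [hΓη hgt.le]
    obtain ⟨hmem, hderiv⟩ := hη t ⟨hgt.le, ht.2⟩
    exact ⟨hmem, hderiv.congr_of_eventuallyEq (hΓη.eventuallyEq_of_mem (Ici_mem_nhds hgt))⟩

end Continuation

/-- The vector field on `ℝ × ℝ` whose integral curves `t ↦ (A t, B t)` in the open first quadrant
are the solutions of the reduced system. Off the axis `B = 0` it is smooth; on it, division by zero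
makes it vanish. -/
noncomputable def sl2RedField (p : ℝ × ℝ) : ℝ × ℝ :=
  (-2 * p.1 ^ 3 / p.2 ^ 4, 2 * (3 * p.1 ^ 2 + 4 * p.1 * p.2) / p.2 ^ 3)

theorem contDiffAt_sl2RedField {p : ℝ × ℝ} (hp : p.2 ≠ 0) {n : WithTop ℕ∞} :
    ContDiffAt ℝ n sl2RedField p := by
  refine ContDiffAt.prodMk (ContDiffAt.div (by fun_prop) (by fun_prop) ?_)
    (ContDiffAt.div (by fun_prop) (by fun_prop) ?_) <;>
  exact pow_ne_zero _ hp

theorem isSolSL2Red_iff_hasDerivAt_sl2RedField {A B : ℝ → ℝ} {s : Set ℝ} :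
    IsSolSL2Red A B s ↔ ∀ t ∈ s, (A t, B t) ∈ Ioi (0 : ℝ) ×ˢ Ioi (0 : ℝ) ∧
      HasDerivAt (fun u => (A u, B u)) (sl2RedField (A t, B t)) t :=
  forall₂_congr fun _ _ => and_congr Iff.rfl
    ⟨fun h => h.1.prodMk h.2, fun h => ⟨h.fst, h.snd⟩⟩

namespace IsSolSL2Red

section Estimates

variable {A B : ℝ → ℝ} {s : Set ℝ} {t₀ t : ℝ}

theorem hasDerivAt_one_div_sq_fst (h : IsSolSL2Red A B s) (ht : t ∈ s) :
    HasDerivAt (fun u => 1 / A u ^ 2) (4 / B t ^ 4) t := by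
  obtain ⟨⟨hA, hB⟩, hdA, -⟩ := h t ht
  simp only [one_div]
  refine ((hdA.fun_pow 2).fun_inv (by positivity)).congr_deriv ?_
  field_simp
  norm_num
  ring

theorem hasDerivAt_cube_snd (h : IsSolSL2Red A B s) (ht : t ∈ s) :
    HasDerivAt (fun u => B u ^ 3) (24 * A t + 18 * A t ^ 2 / B t) t := by
  obtain ⟨⟨hA, hB⟩, -, hdB⟩ := h t ht
  refine (hdB.fun_pow 3).congr_deriv ?_
  field_simp
  norm_num
  ring

theorem strictAntiOn_fst (h : IsSolSL2Red A B s) (hs : Convex ℝ s) : StrictAntiOn A s := by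
  refine strictAntiOn_of_hasDerivWithinAt_neg hs (HasDerivAt.continuousOn fun t ht => (h t ht).2.1)
    (fun t ht => (h t (interior_subset ht)).2.1.hasDerivWithinAt) fun t ht => ?_
  obtain ⟨⟨hA, hB⟩, -⟩ := h t (interior_subset ht)
  rw [neg_mul, neg_div, neg_lt_zero]
  positivity

theorem strictMonoOn_snd (h : IsSolSL2Red A B s) (hs : Convex ℝ s) : StrictMonoOn B s := by
  refine strictMonoOn_of_hasDerivWithinAt_pos hs (HasDerivAt.continuousOn fun t ht => (h t ht).2.2)
    (fun t ht => (h t (interior_subset ht)).2.2.hasDerivWithinAt) fun t ht => ?_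
  obtain ⟨⟨hA, hB⟩, -⟩ := h t (interior_subset ht)
  positivity

theorem one_div_sq_fst_le (h : IsSolSL2Red A B s) (hs : Convex ℝ s) (ht₀ : t₀ ∈ s) (ht : t ∈ s)
    (hle : t₀ ≤ t) : 1 / A t ^ 2 ≤ 4 / B t₀ ^ 4 * (t - t₀) + 1 / A t₀ ^ 2 := by
  have hIcc : Icc t₀ t ⊆ s := hs.ordConnected.out ht₀ ht
  refine sub_le_iff_le_add.1 <| sub_le_mul_sub_of_hasDerivAt_le hle
    (fun u hu => h.hasDerivAt_one_div_sq_fst (hIcc hu)) fun u hu => ?_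
  have hB₀ : 0 < B t₀ := (h t₀ ht₀).1.2
  have hBu : B t₀ ≤ B u := (h.strictMonoOn_snd hs).monotoneOn ht₀ (hIcc hu) hu.1
  gcongr

theorem cube_snd_le (h : IsSolSL2Red A B s) (hs : Convex ℝ s) (ht₀ : t₀ ∈ s) (ht : t ∈ s)
    (hle : t₀ ≤ t) :
    B t ^ 3 ≤ (24 * A t₀ + 18 * A t₀ ^ 2 / B t₀) * (t - t₀) + B t₀ ^ 3 := by
  have hIcc : Icc t₀ t ⊆ s := hs.ordConnected.out ht₀ ht
  refine sub_le_iff_le_add.1 <| sub_le_mul_sub_of_hasDerivAt_le hle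
    (fun u hu => h.hasDerivAt_cube_snd (hIcc hu)) fun u hu => ?_
  have hB₀ : 0 < B t₀ := (h t₀ ht₀).1.2
  have hA : 0 < A u := (h u (hIcc hu)).1.1
  have hAu : A u ≤ A t₀ := (h.strictAntiOn_fst hs).antitoneOn ht₀ (hIcc hu) hu.1
  have hBu : B t₀ ≤ B u := (h.strictMonoOn_snd hs).monotoneOn ht₀ (hIcc hu) hu.1
  gcongr

theorem rpow_le_fst (h : IsSolSL2Red A B s) (hs : Convex ℝ s) (ht₀ : t₀ ∈ s) (ht : t ∈ s)
    (hle : t₀ ≤ t) :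
    (4 / B t₀ ^ 4 * (t - t₀) + 1 / A t₀ ^ 2) ^ (-(1 : ℝ) / 2) ≤ A t := by
  have hA : 0 < A t := (h t ht).1.1
  have hbound := h.one_div_sq_fst_le hs ht₀ ht hle
  have hpos : 0 < 1 / A t ^ 2 := by positivity
  rw [show -(1 : ℝ) / 2 = (-2)⁻¹ by norm_num,
    Real.rpow_inv_le_iff_of_neg (hpos.trans_le hbound) hA (by norm_num), Real.rpow_neg hA.le,
    Real.rpow_two, ← one_div]
  exact hbound

theorem snd_le_rpow (h : IsSolSL2Red A B s) (hs : Convex ℝ s) (ht₀ : t₀ ∈ s) (ht : t ∈ s)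
    (hle : t₀ ≤ t) :
    B t ≤ ((24 * A t₀ + 18 * A t₀ ^ 2 / B t₀) * (t - t₀) + B t₀ ^ 3) ^ ((1 : ℝ) / 3) := by
  have hB : 0 < B t := (h t ht).1.2
  have hbound := h.cube_snd_le hs ht₀ ht hle
  have hpos : 0 < B t ^ 3 := by positivity
  rw [one_div, Real.le_rpow_inv_iff_of_pos hB.le (hpos.trans_le hbound).le (by norm_num),
    Real.rpow_ofNat]
  exact hbound

end Estimates

variable {A B : ℝ → ℝ} {t₀ T : ℝ}

theorem exists_pos_tendsto_fst (h : IsSolSL2Red A B (Ico t₀ T)) (hT : t₀ < T) :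
    ∃ a > 0, Tendsto A (𝓝[<] T) (𝓝 a) := by
  have ht₀ : t₀ ∈ Ico t₀ T := left_mem_Ico.2 hT
  obtain ⟨⟨hA₀, hB₀⟩, -⟩ := h t₀ ht₀
  have hconv : Convex ℝ (Ico t₀ T) := convex_Ico t₀ T
  have hlower : ∀ t ∈ Ico t₀ T,
      (4 / B t₀ ^ 4 * (T - t₀) + 1 / A t₀ ^ 2) ^ (-(1 : ℝ) / 2) ≤ A t := fun t ht => by
    refine le_trans ?_ (h.rpow_le_fst hconv ht₀ ht ht.1)
    have hsub : 0 ≤ t - t₀ := sub_nonneg.2 ht.1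
    refine Real.rpow_le_rpow_of_nonpos (by positivity) ?_ (by norm_num)
    gcongr
    exact ht.2.le
  obtain ⟨a, ha, hlim⟩ := exists_mem_Icc_tendsto_nhdsLT_of_antitoneOn hT
    (h.strictAntiOn_fst hconv).antitoneOn hlower
  exact ⟨a, lt_of_lt_of_le (by positivity) ha.1, hlim⟩

theorem exists_pos_tendsto_snd (h : IsSolSL2Red A B (Ico t₀ T)) (hT : t₀ < T) :
    ∃ b > 0, Tendsto B (𝓝[<] T) (𝓝 b) := by
  have ht₀ : t₀ ∈ Ico t₀ T := left_mem_Ico.2 hT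
  obtain ⟨⟨hA₀, hB₀⟩, -⟩ := h t₀ ht₀
  have hconv : Convex ℝ (Ico t₀ T) := convex_Ico t₀ T
  have hupper : ∀ t ∈ Ico t₀ T,
      B t ≤ ((24 * A t₀ + 18 * A t₀ ^ 2 / B t₀) * (T - t₀) + B t₀ ^ 3) ^ ((1 : ℝ) / 3) :=
    fun t ht => by
      refine (h.snd_le_rpow hconv ht₀ ht ht.1).trans ?_
      have hsub : 0 ≤ t - t₀ := sub_nonneg.2 ht.1
      gcongr
      exact ht.2.le
  obtain ⟨b, hb, hlim⟩ := exists_mem_Icc_tendsto_nhdsLT_of_monotoneOn hT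
    (h.strictMonoOn_snd hconv).monotoneOn hupper
  exact ⟨b, hB₀.trans_le hb.1, hlim⟩

theorem exists_continuation (h : IsSolSL2Red A B (Ico t₀ T)) (hT : t₀ < T) :
    ∃ A' B' : ℝ → ℝ, EqOn A' A (Iio T) ∧ EqOn B' B (Iio T) ∧
      ∃ T' > T, IsSolSL2Red A' B' (Ico t₀ T') := by
  obtain ⟨a, ha, hA⟩ := h.exists_pos_tendsto_fst hT
  obtain ⟨b, hb, hB⟩ := h.exists_pos_tendsto_snd hT
  obtain ⟨γ, hγ, T', hT', hsol⟩ := exists_continuation_of_tendsto_nhdsLT hT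
    (isSolSL2Red_iff_hasDerivAt_sl2RedField.1 h) (hA.prodMk_nhds hB)
    (contDiffAt_sl2RedField hb.ne') (prod_mem_nhds (Ioi_mem_nhds ha) (Ioi_mem_nhds hb))
  exact ⟨fun t => (γ t).1, fun t => (γ t).2, fun t ht => congrArg Prod.fst (hγ ht),
    fun t ht => congrArg Prod.snd (hγ ht), T', hT',
    isSolSL2Red_iff_hasDerivAt_sl2RedField.2 hsol⟩

end IsSolSL2Red

theorem setOf_nonneg_and_coe_lt_coe (T : ℝ) :
    {t : ℝ | 0 ≤ t ∧ (t : EReal) < (T : EReal)} = Ico 0 T := by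
  simp only [EReal.coe_lt_coe_iff, Ico_def]

theorem IsMaxSolSL2Red.eq_top {A B : ℝ → ℝ} {T : EReal} (h : IsMaxSolSL2Red A B T)
    (hT : 0 < T) : T = ⊤ := by
  obtain ⟨hsol, hmax⟩ := h
  induction T with
  | bot => exact absurd hT not_lt_bot
  | top => rfl
  | coe T =>
    rw [setOf_nonneg_and_coe_lt_coe] at hsol
    obtain ⟨A', B', hA, hB, T', hT', hsol'⟩ := hsol.exists_continuation (EReal.coe_pos.1 hT)
    rw [← setOf_nonneg_and_coe_lt_coe] at hsol'
    refine absurd (fun t _ ht => ?_) (hmax A' B' T' (EReal.coe_lt_coe_iff.2 hT') hsol')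
    exact ⟨hA (EReal.coe_lt_coe_iff.1 ht), hB (EReal.coe_lt_coe_iff.1 ht)⟩

/-- For the reduced (`B = C`) `SL(2,ℝ)` negative cross curvature flow with
`A(0) = A0 > 0`, `B(0) = B0 > 0`: `A` is decreasing, `B` is increasing, the (maximal)
solution exists on all of `[0, ∞)`, and for all `t ≥ 0`,
`A(t) ≥ (4B0⁻⁴t + A0⁻²)^{-1/2}` and `B(t) ≤ (C1 t + B0³)^{1/3}` where
`C1 = 24A0 + 18A0²/B0`. -/
theorem sl2_reduced_global_existence
    (A0 B0 : ℝ) (hA0 : 0 < A0) (hB0 : 0 < B0)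
    (A B : ℝ → ℝ) (T : EReal) (hT : 0 < T)
    (hmax : IsMaxSolSL2Red A B T)
    (hinitA : A 0 = A0) (hinitB : B 0 = B0)
    (C1 : ℝ) (hC1 : C1 = 24 * A0 + 18 * A0 ^ 2 / B0) :
    T = ⊤ ∧
    StrictAntiOn A (Set.Ici (0 : ℝ)) ∧
    StrictMonoOn B (Set.Ici (0 : ℝ)) ∧
    ∀ t : ℝ, 0 ≤ t →
      A t ≥ (4 / B0 ^ 4 * t + 1 / A0 ^ 2) ^ (-(1 : ℝ) / 2) ∧
      B t ≤ (C1 * t + B0 ^ 3) ^ ((1 : ℝ) / 3) := by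
  obtain rfl : T = ⊤ := hmax.eq_top hT
  have hsol : IsSolSL2Red A B (Ici 0) := fun t ht => hmax.1 t ⟨ht, EReal.coe_lt_top t⟩
  have hconv : Convex ℝ (Ici (0 : ℝ)) := convex_Ici 0
  refine ⟨rfl, hsol.strictAntiOn_fst hconv, hsol.strictMonoOn_snd hconv, fun t ht => ?_⟩
  have hAt := hsol.rpow_le_fst hconv self_mem_Ici ht ht
  have hBt := hsol.snd_le_rpow hconv self_mem_Ici ht ht
  rw [sub_zero, hinitA, hinitB] at hAt hBt
  exact ⟨hAt, hC1 ▸ hBt⟩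
end

section
/- Let A, B be a positive solution on [0, ∞) of the reduced SL(2,ℝ) system dA/dt = -2A^3/B^4, dB/dt = 2(3A^2 + 4AB)/B^3 with A_0, B_0 > 0. Then d(4A^{-1} + B^{-1})/dt = -6A^2/B^5 and d(A^9 B^3)/dt = 24 A^{10} along the solution; consequently A(t) decreases to a positive limit A_∞ > 0, B(t) → ∞ as t → ∞, and as t → ∞ one has B(t)/(24 A_∞ t)^{1/3} → 1 and t^{1/3}(A(t) - A_∞) → A_∞^{5/3}/(8·3^{1/3}). -/
/-!
The quantity `4/A + 1/B` is nonincreasing along the flow, which bounds `A` away from zero; as `A`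
itself is nonincreasing, it converges to some `A∞ > 0`. The derivative `24A¹⁰` of `A⁹B³` therefore
converges to `24A∞¹⁰`, so `A⁹B³/t` has the same limit, that is, `B³/t → 24A∞`. Finally
`A'/(1/B)' = 2A²/(6A/B + 8) → A∞²/4`, so L'Hôpital's rule gives `(A - A∞)B → A∞²/4`, and dividing
by `B/t^(1/3) → (24A∞)^(1/3)` yields the rate for `A`.
-/

open Filter Topology Set Asymptotics

section Cesaro

variable {E : Type*} [NormedAddCommGroup E] [NormedSpace ℝ E] {f f' : ℝ → E}

lemma isLittleO_id_of_tendsto_deriv_zero (hf : ∀ᶠ t in atTop, HasDerivAt f (f' t) t)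
    (hf' : Tendsto f' atTop (𝓝 0)) : f =o[atTop] (id : ℝ → ℝ) := by
  refine isLittleO_iff.2 fun ε hε => ?_
  have hsmall : ∀ᶠ t in atTop, ‖f' t‖ ≤ ε / 2 :=
    (tendsto_zero_iff_norm_tendsto_zero.1 hf').eventually_le_const (half_pos hε)
  obtain ⟨T, hT⟩ := eventually_atTop.1 ((eventually_ge_atTop 0).and (hf.and hsmall))
  have hT₀ : 0 ≤ T := (hT T le_rfl).1
  have hinitial : ∀ᶠ t in atTop, ‖f T‖ ≤ ε / 2 * ‖id t‖ :=
    isLittleO_iff.1 (isLittleO_const_id_atTop (f T)) (half_pos hε)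
  filter_upwards [hinitial, eventually_ge_atTop T] with t hfT hTt
  have hincrement : ‖f t - f T‖ ≤ ε / 2 * ‖t - T‖ :=
    (convex_Ici T).norm_image_sub_le_of_norm_hasDerivWithin_le
      (fun s hs => (hT s hs).2.1.hasDerivWithinAt) (fun s hs => (hT s hs).2.2) self_mem_Ici hTt
  rw [Real.norm_of_nonneg (sub_nonneg.2 hTt)] at hincrement
  rw [id, Real.norm_of_nonneg (hT₀.trans hTt)] at hfT ⊢
  calc ‖f t‖ ≤ ‖f t - f T‖ + ‖f T‖ := norm_le_norm_sub_add _ _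
    _ ≤ ε / 2 * (t - T) + ε / 2 * t := add_le_add hincrement hfT
    _ ≤ ε * t := by linarith [mul_nonneg hε.le hT₀]

lemma tendsto_inv_smul_of_tendsto_deriv {L : E} (hf : ∀ᶠ t in atTop, HasDerivAt f (f' t) t)
    (hf' : Tendsto f' atTop (𝓝 L)) : Tendsto (fun t => t⁻¹ • f t) atTop (𝓝 L) := by
  have hdiff : (fun t => f t - t • L) =o[atTop] (id : ℝ → ℝ) := by
    refine isLittleO_id_of_tendsto_deriv_zero (f' := fun t => f' t - L) ?_ ?_
    · filter_upwards [hf] with t ht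
      simpa using ht.fun_sub ((hasDerivAt_id t).smul_const L)
    · simpa using hf'.sub_const L
  have hlim := hdiff.tendsto_inv_smul_nhds_zero.add_const L
  rw [zero_add] at hlim
  refine hlim.congr' ?_
  filter_upwards [eventually_ne_atTop 0] with t ht
  simp [smul_sub, ht]

end Cesaro

lemma antitoneOn_of_hasDerivAt_nonpos {s : Set ℝ} (hs : Convex ℝ s) {g g' : ℝ → ℝ}
    (hg : ∀ t ∈ s, HasDerivAt g (g' t) t) (hg' : ∀ t ∈ s, g' t ≤ 0) : AntitoneOn g s :=
  antitoneOn_of_hasDerivWithinAt_nonpos hs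
    (fun t ht => (hg t ht).continuousAt.continuousWithinAt)
    (fun t ht => (hg t (interior_subset ht)).hasDerivWithinAt)
    (fun t ht => hg' t (interior_subset ht))

lemma exists_tendsto_atTop_of_antitoneOn_Ici {α β : Type*} [Preorder α]
    [IsDirectedOrder α] [ConditionallyCompleteLattice β] [TopologicalSpace β]
    [InfConvergenceClass β] {f : α → β} {a : α}
    (hf : AntitoneOn f (Ici a)) (hbdd : BddBelow (f '' Ici a)) :
    ∃ L, Tendsto f atTop (𝓝 L) := by
  rw [image_eq_range] at hbdd
  exact ⟨_, tendsto_comp_val_Ici_atTop.1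
    (tendsto_atTop_ciInf (antitoneOn_iff_antitone.1 hf) hbdd)⟩

lemma tendsto_div_rpow_inv_of_tendsto_pow_div {α : Type*} {l : Filter α} {u v : α → ℝ} {c : ℝ}
    {n : ℕ} (hn : n ≠ 0) (hu : ∀ᶠ x in l, 0 ≤ u x) (hv : ∀ᶠ x in l, 0 ≤ v x)
    (h : Tendsto (fun x => u x ^ n / v x) l (𝓝 c)) :
    Tendsto (fun x => u x / v x ^ (n⁻¹ : ℝ)) l (𝓝 (c ^ (n⁻¹ : ℝ))) := by
  refine (h.rpow_const (Or.inr (by positivity))).congr' ?_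
  filter_upwards [hu, hv] with x hux hvx
  rw [Real.div_rpow (by positivity) hvx, Real.pow_rpow_inv_natCast hux hn]

lemma sq_div_four_div_rpow_third {a : ℝ} (ha : 0 < a) :
    a ^ 2 / 4 / (24 * a) ^ ((1 : ℝ) / 3) =
      a ^ ((5 : ℝ) / 3) / (8 * (3 : ℝ) ^ ((1 : ℝ) / 3)) := by
  have cbrt_eight : (8 : ℝ) ^ ((1 : ℝ) / 3) = 2 := by
    rw [show (8 : ℝ) = 2 ^ (3 : ℝ) by norm_num, ← Real.rpow_mul (by norm_num)]
    norm_num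
  have cbrt_mul : (24 * a) ^ ((1 : ℝ) / 3) =
      2 * (3 : ℝ) ^ ((1 : ℝ) / 3) * a ^ ((1 : ℝ) / 3) := by
    rw [show 24 * a = 8 * 3 * a by ring, Real.mul_rpow (by norm_num) ha.le,
      Real.mul_rpow (by norm_num) (by norm_num), cbrt_eight]
  have sq_split : a ^ 2 = a ^ ((5 : ℝ) / 3) * a ^ ((1 : ℝ) / 3) := by
    rw [← Real.rpow_add ha, ← Real.rpow_natCast]
    norm_num
  rw [cbrt_mul, sq_split]
  field_simp
  norm_num

namespace IsSolSL2Red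

variable {A B : ℝ → ℝ} {s : Set ℝ} {t : ℝ}

lemma A_pos (h : IsSolSL2Red A B s) (ht : t ∈ s) : 0 < A t := (h t ht).1.1

lemma B_pos (h : IsSolSL2Red A B s) (ht : t ∈ s) : 0 < B t := (h t ht).1.2

lemma hasDerivAt_A (h : IsSolSL2Red A B s) (ht : t ∈ s) :
    HasDerivAt A (-2 * A t ^ 3 / B t ^ 4) t := (h t ht).2.1

lemma hasDerivAt_B (h : IsSolSL2Red A B s) (ht : t ∈ s) :
    HasDerivAt B (2 * (3 * A t ^ 2 + 4 * A t * B t) / B t ^ 3) t := (h t ht).2.2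

lemma hasDerivAt_one_div_B (h : IsSolSL2Red A B s) (ht : t ∈ s) :
    HasDerivAt (fun r => 1 / B r) (-(6 * A t ^ 2 + 8 * A t * B t) / B t ^ 5) t := by
  have hB := (h.B_pos ht).ne'
  simp only [one_div]
  refine ((h.hasDerivAt_B ht).fun_inv hB).congr_deriv ?_
  field_simp
  ring

lemma hasDerivAt_four_div_A_add_one_div_B (h : IsSolSL2Red A B s) (ht : t ∈ s) :
    HasDerivAt (fun r => 4 / A r + 1 / B r) (-6 * A t ^ 2 / B t ^ 5) t := by
  have hA := (h.A_pos ht).ne'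
  have hB := (h.B_pos ht).ne'
  simp only [div_eq_mul_inv (4 : ℝ)]
  refine ((((h.hasDerivAt_A ht).fun_inv hA).const_mul 4).fun_add
    (h.hasDerivAt_one_div_B ht)).congr_deriv ?_
  field_simp
  ring

lemma hasDerivAt_A_pow_mul_B_pow (h : IsSolSL2Red A B s) (ht : t ∈ s) :
    HasDerivAt (fun r => A r ^ 9 * B r ^ 3) (24 * A t ^ 10) t := by
  have hB := (h.B_pos ht).ne'
  refine (((h.hasDerivAt_A ht).fun_pow 9).fun_mul
    ((h.hasDerivAt_B ht).fun_pow 3)).congr_deriv ?_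
  field_simp
  push_cast
  ring

lemma antitoneOn_A (h : IsSolSL2Red A B s) (hs : Convex ℝ s) : AntitoneOn A s := by
  refine antitoneOn_of_hasDerivAt_nonpos hs (fun t ht => h.hasDerivAt_A ht) fun t ht => ?_
  have hA := h.A_pos ht
  rw [neg_mul, neg_div, neg_nonpos]
  positivity

lemma antitoneOn_four_div_A_add_one_div_B (h : IsSolSL2Red A B s) (hs : Convex ℝ s) :
    AntitoneOn (fun r => 4 / A r + 1 / B r) s := by
  refine antitoneOn_of_hasDerivAt_nonpos hs
    (fun t ht => h.hasDerivAt_four_div_A_add_one_div_B ht) fun t ht => ?_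
  have hB := h.B_pos ht
  rw [neg_mul, neg_div, neg_nonpos]
  positivity

lemma exists_pos_forall_le_A {a : ℝ} (h : IsSolSL2Red A B (Ici a)) :
    ∃ c > 0, ∀ t ∈ Ici a, c ≤ A t := by
  have hA₀ := h.A_pos self_mem_Ici
  have hB₀ := h.B_pos self_mem_Ici
  refine ⟨4 / (4 / A a + 1 / B a), by positivity, fun t ht => ?_⟩
  have hA := h.A_pos ht
  have hB := one_div_pos.2 (h.B_pos ht)
  have hmono : 4 / A t + 1 / B t ≤ 4 / A a + 1 / B a :=
    h.antitoneOn_four_div_A_add_one_div_B (convex_Ici a) self_mem_Ici ht ht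
  rw [div_le_comm₀ (by positivity) hA]
  linarith

section Asymptotics

variable {a L : ℝ}

lemma exists_tendsto_A (h : IsSolSL2Red A B (Ici a)) : ∃ L, Tendsto A atTop (𝓝 L) := by
  obtain ⟨c, -, hc⟩ := h.exists_pos_forall_le_A
  exact exists_tendsto_atTop_of_antitoneOn_Ici (h.antitoneOn_A (convex_Ici a))
    ⟨c, forall_mem_image.2 hc⟩

lemma limit_A_pos (h : IsSolSL2Red A B (Ici a)) (hL : Tendsto A atTop (𝓝 L)) : 0 < L := by
  obtain ⟨c, hc_pos, hc⟩ := h.exists_pos_forall_le_A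
  exact hc_pos.trans_le (ge_of_tendsto hL ((eventually_ge_atTop a).mono hc))

lemma tendsto_B_pow_three_div (h : IsSolSL2Red A B (Ici a)) (hL : Tendsto A atTop (𝓝 L)) :
    Tendsto (fun t => B t ^ 3 / t) atTop (𝓝 (24 * L)) := by
  have hL_ne := (h.limit_A_pos hL).ne'
  have hderiv : ∀ᶠ t in atTop, HasDerivAt (fun r => A r ^ 9 * B r ^ 3) (24 * A t ^ 10) t :=
    (eventually_ge_atTop a).mono fun t ht => h.hasDerivAt_A_pow_mul_B_pow ht
  have hprod : Tendsto (fun t => t⁻¹ • (A t ^ 9 * B t ^ 3)) atTop (𝓝 (24 * L ^ 10)) :=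
    tendsto_inv_smul_of_tendsto_deriv hderiv ((hL.pow 10).const_mul 24)
  have hquot := hprod.div (hL.pow 9) (pow_ne_zero 9 hL_ne)
  rw [show 24 * L ^ 10 / L ^ 9 = 24 * L by field_simp] at hquot
  refine hquot.congr' ?_
  filter_upwards [eventually_ge_atTop a] with t ht
  have hA := (h.A_pos ht).ne'
  simp only [Pi.div_apply, smul_eq_mul]
  field_simp

lemma tendsto_B_div_rpow (h : IsSolSL2Red A B (Ici a)) (hL : Tendsto A atTop (𝓝 L)) :
    Tendsto (fun t => B t / t ^ ((1 : ℝ) / 3)) atTop (𝓝 ((24 * L) ^ ((1 : ℝ) / 3))) := by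
  simpa using tendsto_div_rpow_inv_of_tendsto_pow_div three_ne_zero
    ((eventually_ge_atTop a).mono fun t ht => (h.B_pos ht).le) (eventually_ge_atTop 0)
    (h.tendsto_B_pow_three_div hL)

lemma tendsto_B_atTop (h : IsSolSL2Red A B (Ici a)) (hL : Tendsto A atTop (𝓝 L)) :
    Tendsto B atTop atTop := by
  have hL_pos := h.limit_A_pos hL
  refine ((h.tendsto_B_div_rpow hL).pos_mul_atTop (by positivity)
    (tendsto_rpow_atTop (by norm_num : (0 : ℝ) < 1 / 3))).congr' ?_
  filter_upwards [eventually_gt_atTop 0] with t ht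
  exact div_mul_cancel₀ _ (by positivity)

lemma tendsto_B_div_rpow_nhds_one (h : IsSolSL2Red A B (Ici a)) (hL : Tendsto A atTop (𝓝 L)) :
    Tendsto (fun t => B t / (24 * L * t) ^ ((1 : ℝ) / 3)) atTop (𝓝 1) := by
  have hL_pos := h.limit_A_pos hL
  have hlim := (h.tendsto_B_div_rpow hL).div_const ((24 * L) ^ ((1 : ℝ) / 3))
  rw [div_self (by positivity)] at hlim
  refine hlim.congr' ?_
  filter_upwards [eventually_ge_atTop 0] with t ht
  rw [Real.mul_rpow (by positivity) ht, div_div, mul_comm]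

lemma tendsto_deriv_A_div_deriv_one_div_B (h : IsSolSL2Red A B (Ici a))
    (hL : Tendsto A atTop (𝓝 L)) :
    Tendsto (fun t => (-2 * A t ^ 3 / B t ^ 4) / (-(6 * A t ^ 2 + 8 * A t * B t) / B t ^ 5))
      atTop (𝓝 (L ^ 2 / 4)) := by
  have hlim : Tendsto (fun t => 2 * A t ^ 2 / (6 * (A t / B t) + 8)) atTop
      (𝓝 (2 * L ^ 2 / (6 * 0 + 8))) :=
    ((hL.pow 2).const_mul 2).div
      (((hL.div_atTop (h.tendsto_B_atTop hL)).const_mul 6).add_const 8) (by norm_num)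
  rw [show 2 * L ^ 2 / (6 * 0 + 8) = L ^ 2 / 4 by ring] at hlim
  refine hlim.congr' ?_
  filter_upwards [eventually_ge_atTop a] with t ht
  have hA := h.A_pos ht
  have hB := h.B_pos ht
  rw [neg_mul, neg_div (B t ^ 4), neg_div (B t ^ 5), neg_div_neg_eq, div_div_div_eq,
    div_eq_div_iff (by positivity) (by positivity)]
  field_simp

lemma tendsto_A_sub_mul_B (h : IsSolSL2Red A B (Ici a)) (hL : Tendsto A atTop (𝓝 L)) :
    Tendsto (fun t => (A t - L) * B t) atTop (𝓝 (L ^ 2 / 4)) := by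
  have hge : ∀ᶠ t in atTop, t ∈ Ici a := eventually_ge_atTop a
  have hquot : Tendsto (fun t => (A t - L) / (1 / B t)) atTop (𝓝 (L ^ 2 / 4)) := by
    refine HasDerivAt.lhopital_zero_atTop
      (hge.mono fun t ht => (h.hasDerivAt_A ht).sub_const L)
      (hge.mono fun t ht => h.hasDerivAt_one_div_B ht)
      (hge.mono fun t ht => ?_) (tendsto_sub_nhds_zero_iff.2 hL)
      (tendsto_const_nhds.div_atTop (h.tendsto_B_atTop hL))
      (h.tendsto_deriv_A_div_deriv_one_div_B hL)
    have hA := h.A_pos ht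
    have hB := h.B_pos ht
    exact div_ne_zero (neg_ne_zero.2 (by positivity)) (by positivity)
  simpa only [div_div_eq_mul_div, div_one] using hquot

lemma tendsto_rpow_mul_A_sub (h : IsSolSL2Red A B (Ici a)) (hL : Tendsto A atTop (𝓝 L)) :
    Tendsto (fun t => t ^ ((1 : ℝ) / 3) * (A t - L)) atTop
      (𝓝 (L ^ ((5 : ℝ) / 3) / (8 * (3 : ℝ) ^ ((1 : ℝ) / 3)))) := by
  have hL_pos := h.limit_A_pos hL
  rw [← sq_div_four_div_rpow_third hL_pos]
  refine ((h.tendsto_A_sub_mul_B hL).div (h.tendsto_B_div_rpow hL) (by positivity)).congr' ?_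
  filter_upwards [eventually_ge_atTop a] with t ht
  have hB := (h.B_pos ht).ne'
  simp only [Pi.div_apply]
  field_simp

end Asymptotics

end IsSolSL2Red

/-- For a positive global solution of the reduced (`B = C`) `SL(2,ℝ)` negative cross
curvature flow: `d(4A⁻¹ + B⁻¹)/dt = -6A²/B⁵` and `d(A⁹B³)/dt = 24A¹⁰`; consequently
`A` decreases to a positive limit `A∞ > 0`, `B → ∞`, and as `t → ∞`,
`B ∼ (24A∞t)^{1/3}` and `A ∼ A∞ + (1/(8·3^{1/3}))A∞^{5/3} t^{-1/3}`. -/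
theorem sl2_reduced_asymptotics
    (A0 B0 : ℝ) (hA0 : 0 < A0) (hB0 : 0 < B0)
    (A B : ℝ → ℝ)
    (hsol : IsSolSL2Red A B (Set.Ici (0 : ℝ)))
    (hinitA : A 0 = A0) (hinitB : B 0 = B0) :
    (∀ t ∈ Set.Ici (0 : ℝ),
      HasDerivAt (fun s => 4 / A s + 1 / B s) (-6 * A t ^ 2 / B t ^ 5) t ∧
      HasDerivAt (fun s => A s ^ 9 * B s ^ 3) (24 * A t ^ 10) t) ∧
    ∃ Ainf : ℝ, 0 < Ainf ∧
      AntitoneOn A (Set.Ici (0 : ℝ)) ∧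
      Filter.Tendsto A Filter.atTop (nhds Ainf) ∧
      Filter.Tendsto B Filter.atTop Filter.atTop ∧
      Filter.Tendsto (fun t : ℝ => B t / (24 * Ainf * t) ^ ((1 : ℝ) / 3))
        Filter.atTop (nhds 1) ∧
      Filter.Tendsto (fun t : ℝ => t ^ ((1 : ℝ) / 3) * (A t - Ainf))
        Filter.atTop (nhds (Ainf ^ ((5 : ℝ) / 3) / (8 * (3 : ℝ) ^ ((1 : ℝ) / 3)))) := by
  obtain ⟨Ainf, hlim⟩ := hsol.exists_tendsto_A
  exact ⟨fun t ht =>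
      ⟨hsol.hasDerivAt_four_div_A_add_one_div_B ht, hsol.hasDerivAt_A_pow_mul_B_pow ht⟩,
    Ainf, hsol.limit_A_pos hlim, hsol.antitoneOn_A (convex_Ici 0), hlim,
    hsol.tendsto_B_atTop hlim, hsol.tendsto_B_div_rpow_nhds_one hlim,
    hsol.tendsto_rpow_mul_A_sub hlim⟩
end

section
/- Let A, B, C be a positive solution of the SL(2,ℝ) negative cross curvature flow ODE system on [0, T) with B_0 > C_0 > 0, A_0 > 0, and suppose that at t = 0 the ratios a = A/B and c = C/B satisfy a < 1 - c + 2 sqrt(1 - c) and a > (1/3)(2 sqrt(1 - c + c^2) - 1 - c) (equivalently F_2(0) < 0 and F_1(0) < 0). Then these two inequalities, i.e. F_1 < 0 and F_2 < 0, hold for all t ∈ [0, T). -/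
/-!
Completing the square, `F2 = (A + C - B)² - 4B(B - C)`, so for positive `A` and `B` the inequality
`F2 ≤ 0` already forces `C < B`. Hence `F3 > 0` and `F1 + F2 < 0` on `{F2 ≤ 0}`. Where `F1 = 0` and
`F2 ≤ 0`, the functions `B` and `C` are stationary and `F1' = (∂F1/∂A) A'` is a positive multiple of
`F2 F3 < 0`; where `F2 = 0`, only `B` moves and `F2' = (∂F2/∂B) B'` is a positive multiple of
`F1 F3 < 0`. The vector field thus points strictly into `{F1 ≤ 0, F2 ≤ 0}` along its boundary, and
a solution starting in `{F1 < 0, F2 < 0}` has no first exit time.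
-/

/-- `F1 = -3A² + B² + C² - 2BC - 2AC - 2AB` for the `SL(2,ℝ)` cross curvature tensor. -/
def sl2F1 (A B C : ℝ) : ℝ :=
  -3 * A ^ 2 + B ^ 2 + C ^ 2 - 2 * B * C - 2 * A * C - 2 * A * B

/-- `F2 = -3B² + A² + C² + 2BC + 2AC - 2AB` for the `SL(2,ℝ)` cross curvature tensor. -/
def sl2F2 (A B C : ℝ) : ℝ :=
  -3 * B ^ 2 + A ^ 2 + C ^ 2 + 2 * B * C + 2 * A * C - 2 * A * B

/-- `F3 = -3C² + A² + B² + 2BC - 2AC + 2AB` for the `SL(2,ℝ)` cross curvature tensor. -/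
def sl2F3 (A B C : ℝ) : ℝ :=
  -3 * C ^ 2 + A ^ 2 + B ^ 2 + 2 * B * C - 2 * A * C + 2 * A * B

/-- A triple of functions solves the `SL(2,ℝ)` negative cross curvature flow ODE system
(with positivity) on a set `s ⊆ ℝ`. -/
def IsSolSL2 (A B C : ℝ → ℝ) (s : Set ℝ) : Prop :=
  ∀ t ∈ s,
    (0 < A t ∧ 0 < B t ∧ 0 < C t) ∧
    HasDerivAt A
      (-2 * A t * sl2F2 (A t) (B t) (C t) * sl2F3 (A t) (B t) (C t) /
        (A t * B t * C t) ^ 2) t ∧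
    HasDerivAt B
      (-2 * B t * sl2F3 (A t) (B t) (C t) * sl2F1 (A t) (B t) (C t) /
        (A t * B t * C t) ^ 2) t ∧
    HasDerivAt C
      (-2 * C t * sl2F1 (A t) (B t) (C t) * sl2F2 (A t) (B t) (C t) /
        (A t * B t * C t) ^ 2) t

open Set Filter Topology

section Barrier

lemma eventually_lt_of_hasDerivWithinAt_Iio_neg {f : ℝ → ℝ} {d x : ℝ}
    (hf : HasDerivWithinAt f d (Iio x) x) (hd : d < 0) : ∀ᶠ y in 𝓝[<] x, f x < f y := by
  have hslope := (hasDerivWithinAt_iff_tendsto_slope' self_notMem_Iio).1 hf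
  filter_upwards [hslope.eventually_lt_const hd, self_mem_nhdsWithin] with y hy hyx
  rwa [slope_comm, slope_neg_iff_of_le (le_of_lt hyx)] at hy

variable {ι : Type*} {f : ι → ℝ → ℝ} {a b : ℝ}

lemma exists_first_nonneg [Finite ι] (hf : ∀ i, ContinuousOn (f i) (Icc a b))
    (hb : ∃ i, 0 ≤ f i b) (hab : a ≤ b) :
    ∃ τ ∈ Icc a b, (∃ i, 0 ≤ f i τ) ∧ ∀ s ∈ Ico a τ, ∀ i, f i s < 0 := by
  have hclosed : IsClosed (⋃ i, Icc a b ∩ f i ⁻¹' Ici 0) :=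
    isClosed_iUnion_of_finite fun i =>
      (hf i).preimage_isClosed_of_isClosed isClosed_Icc isClosed_Ici
  have hcompact : IsCompact (⋃ i, Icc a b ∩ f i ⁻¹' Ici 0) :=
    isCompact_Icc.of_isClosed_subset hclosed (iUnion_subset fun _ => inter_subset_left)
  obtain ⟨τ, hτ, hleast⟩ := hcompact.exists_isLeast
    (hb.elim fun i hi => ⟨b, mem_iUnion.2 ⟨i, right_mem_Icc.2 hab, hi⟩⟩)
  obtain ⟨i, hτab, hi⟩ := mem_iUnion.1 hτ
  refine ⟨τ, hτab, ⟨i, hi⟩, fun s hs j => not_le.1 fun hj => hs.2.not_ge (hleast ?_)⟩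
  exact mem_iUnion.2 ⟨j, ⟨hs.1, hs.2.le.trans hτab.2⟩, hj⟩

theorem forall_neg_of_hasDerivWithinAt_neg_of_eq_zero [Finite ι]
    (hf : ∀ i, ContinuousOn (f i) (Ico a b)) (ha : ∀ i, f i a < 0)
    (hinward : ∀ t ∈ Ioo a b, (∀ j, f j t ≤ 0) → ∀ i, f i t = 0 →
      ∃ d < 0, HasDerivWithinAt (f i) d (Iio t) t) :
    ∀ t ∈ Ico a b, ∀ i, f i t < 0 := by
  intro t ht
  by_contra! hexit
  have hsub : Icc a t ⊆ Ico a b := Icc_subset_Ico_right ht.2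
  obtain ⟨τ, hτ, ⟨i, hi⟩, hbefore⟩ := exists_first_nonneg (fun i => (hf i).mono hsub) hexit ht.1
  have haτ : a < τ := hτ.1.lt_of_ne fun h => (ha i).not_ge (h ▸ hi)
  have hbefore_left : ∀ j, ∀ᶠ s in 𝓝[<] τ, f j s < 0 := fun j =>
    eventually_of_mem (Ico_mem_nhdsLT haτ) fun s hs => hbefore s hs j
  have hnonpos : ∀ j, f j τ ≤ 0 := fun j =>
    have hcont : ContinuousWithinAt (f j) (Iio τ) τ :=
      (hf j τ (hsub hτ)).mono_of_mem_nhdsWithin <|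
        mem_of_superset (Ico_mem_nhdsLT haτ) (Ico_subset_Ico_right (hsub hτ).2.le)
    le_of_tendsto hcont ((hbefore_left j).mono fun _ => le_of_lt)
  have hzero : f i τ = 0 := (hnonpos i).antisymm hi
  obtain ⟨d, hd, hderiv⟩ := hinward τ ⟨haτ, (hsub hτ).2⟩ hnonpos i hzero
  obtain ⟨s, hτs, hs⟩ :=
    ((eventually_lt_of_hasDerivWithinAt_Iio_neg hderiv hd).and (hbefore_left i)).exists
  exact (hzero ▸ hτs).not_gt hs

end Barrier

section Algebra

variable {A B C : ℝ}

lemma sl2F1_neg_iff (hA : 0 ≤ A) (hB : 0 < B) (hC : 0 ≤ C) :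
    sl2F1 A B C < 0 ↔
      1 / 3 * (2 * √(1 - C / B + (C / B) ^ 2) - 1 - C / B) < A / B := by
  have hdisc : 0 ≤ 1 - C / B + (C / B) ^ 2 := by nlinarith [sq_nonneg (C / B - 1 / 2)]
  have hsquares : sl2F1 A B C =
      B ^ 2 / 3 * ((2 * √(1 - C / B + (C / B) ^ 2)) ^ 2 - (3 * (A / B) + 1 + C / B) ^ 2) := by
    rw [mul_pow, Real.sq_sqrt hdisc, sl2F1]
    field_simp
    ring
  rw [hsquares, ← smul_eq_mul, smul_neg_iff_of_pos_left (by positivity), sub_neg,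
    sq_lt_sq₀ (by positivity) (by positivity)]
  constructor <;> intro h <;> linarith

lemma sl2F2_eq_sq_sub (A B C : ℝ) : sl2F2 A B C = (A + C - B) ^ 2 - 4 * B * (B - C) := by
  unfold sl2F2
  ring

lemma sl2F2_neg_iff (hA : 0 < A) (hB : 0 < B) (hC : 0 ≤ C) (hCB : C ≤ B) :
    sl2F2 A B C < 0 ↔ A / B < 1 - C / B + 2 * √(1 - C / B) := by
  have hc : 0 ≤ 1 - C / B := sub_nonneg.2 (div_le_one_of_le₀ hCB hB.le)
  have hle_sqrt : 1 - C / B ≤ √(1 - C / B) :=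
    Real.le_sqrt_of_sq_le (by nlinarith [div_nonneg hC hB.le])
  have hsquares : sl2F2 A B C =
      B ^ 2 * ((A / B + C / B - 1) ^ 2 - (2 * √(1 - C / B)) ^ 2) := by
    rw [mul_pow, Real.sq_sqrt hc, sl2F2_eq_sq_sub]
    field_simp
    ring
  have hlower : -(2 * √(1 - C / B)) < A / B + C / B - 1 := by
    linarith [div_pos hA hB]
  rw [hsquares, ← smul_eq_mul, smul_neg_iff_of_pos_left (by positivity), sub_neg, sq_lt_sq,
    abs_of_nonneg (by positivity : 0 ≤ 2 * √(1 - C / B)), abs_lt, and_iff_right hlower]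
  constructor <;> intro h <;> linarith

lemma lt_of_sl2F2_nonpos (hA : 0 < A) (hB : 0 ≤ B) (hF2 : sl2F2 A B C ≤ 0) : C < B := by
  by_contra! hBC
  have hsq : 0 < (A + C - B) ^ 2 := pow_pos (by linarith) 2
  have hcross : 4 * B * (B - C) ≤ 0 :=
    mul_nonpos_of_nonneg_of_nonpos (by positivity) (sub_nonpos.2 hBC)
  linarith [sl2F2_eq_sq_sub A B C]

lemma sl2F3_pos (hA : 0 ≤ A) (hC : 0 ≤ C) (hCB : C < B) : 0 < sl2F3 A B C := by
  have hB : 0 < B := hC.trans_lt hCB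
  calc
    0 < (B - C) * (2 * A + B + 3 * C) + A ^ 2 :=
      add_pos_of_pos_of_nonneg (mul_pos (sub_pos.2 hCB) (by positivity)) (sq_nonneg A)
    _ = sl2F3 A B C := by unfold sl2F3; ring

lemma sl2F1_add_sl2F2_neg (hA : 0 ≤ A) (hC : 0 ≤ C) (hCB : C < B) :
    sl2F1 A B C + sl2F2 A B C < 0 := by
  have hB : 0 < B := hC.trans_lt hCB
  have hdiff : 0 < (B - C) * (B + C) := mul_pos (sub_pos.2 hCB) (by positivity)
  calc
    sl2F1 A B C + sl2F2 A B C
        = -(2 * A ^ 2 + 4 * A * B + 2 * ((B - C) * (B + C))) := by unfold sl2F1 sl2F2; ring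
    _ < 0 := neg_neg_of_pos (add_pos_of_nonneg_of_pos (by positivity) (mul_pos two_pos hdiff))

end Algebra

section Derivative

variable {A B C : ℝ → ℝ} {A' B' C' t : ℝ}

lemma hasDerivAt_sl2F1 (hA : HasDerivAt A A' t) (hB : HasDerivAt B B' t)
    (hC : HasDerivAt C C' t) :
    HasDerivAt (fun s => sl2F1 (A s) (B s) (C s))
      (-2 * (3 * A t + B t + C t) * A' + 2 * (B t - C t - A t) * B'
        + 2 * (C t - B t - A t) * C') t := by
  unfold sl2F1
  refine (((((((hA.fun_pow 2).const_mul (-3)).fun_add (hB.fun_pow 2)).fun_add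
    (hC.fun_pow 2)).fun_sub ((hB.const_mul 2).fun_mul hC)).fun_sub
    ((hA.const_mul 2).fun_mul hC)).fun_sub ((hA.const_mul 2).fun_mul hB)).congr_deriv ?_
  push_cast
  ring

lemma hasDerivAt_sl2F2 (hA : HasDerivAt A A' t) (hB : HasDerivAt B B' t)
    (hC : HasDerivAt C C' t) :
    HasDerivAt (fun s => sl2F2 (A s) (B s) (C s))
      (2 * (A t + C t - B t) * A' - 2 * (3 * B t - C t + A t) * B'
        + 2 * (A t + B t + C t) * C') t := by
  unfold sl2F2
  refine (((((((hB.fun_pow 2).const_mul (-3)).fun_add (hA.fun_pow 2)).fun_add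
    (hC.fun_pow 2)).fun_add ((hB.const_mul 2).fun_mul hC)).fun_add
    ((hA.const_mul 2).fun_mul hC)).fun_sub ((hA.const_mul 2).fun_mul hB)).congr_deriv ?_
  push_cast
  ring

end Derivative

namespace IsSolSL2

variable {A B C : ℝ → ℝ} {s : Set ℝ} {t : ℝ}

lemma continuousOn_sl2F1 (hsol : IsSolSL2 A B C s) :
    ContinuousOn (fun t => sl2F1 (A t) (B t) (C t)) s := fun t ht =>
  have ⟨_, hA, hB, hC⟩ := hsol t ht
  (hasDerivAt_sl2F1 hA hB hC).continuousAt.continuousWithinAt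

lemma continuousOn_sl2F2 (hsol : IsSolSL2 A B C s) :
    ContinuousOn (fun t => sl2F2 (A t) (B t) (C t)) s := fun t ht =>
  have ⟨_, hA, hB, hC⟩ := hsol t ht
  (hasDerivAt_sl2F2 hA hB hC).continuousAt.continuousWithinAt

lemma exists_neg_hasDerivAt_sl2F1 (hsol : IsSolSL2 A B C s) (ht : t ∈ s)
    (hF1 : sl2F1 (A t) (B t) (C t) = 0) (hF2 : sl2F2 (A t) (B t) (C t) ≤ 0) :
    ∃ d < 0, HasDerivAt (fun t => sl2F1 (A t) (B t) (C t)) d t := by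
  obtain ⟨⟨hA, hB, hC⟩, hA', hB', hC'⟩ := hsol t ht
  have hCB : C t < B t := lt_of_sl2F2_nonpos hA hB.le hF2
  have hF3 : 0 < sl2F3 (A t) (B t) (C t) := sl2F3_pos hA.le hC.le hCB
  have hF2_neg : sl2F2 (A t) (B t) (C t) < 0 := by
    linarith [sl2F1_add_sl2F2_neg hA.le hC.le hCB]
  have hcoeff : 0 < 4 * A t * (3 * A t + B t + C t) * sl2F3 (A t) (B t) (C t) /
      (A t * B t * C t) ^ 2 := by positivity
  refine ⟨_, mul_neg_of_pos_of_neg hcoeff hF2_neg,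
    (hasDerivAt_sl2F1 hA' hB' hC').congr_deriv ?_⟩
  rw [hF1]
  ring

lemma exists_neg_hasDerivAt_sl2F2 (hsol : IsSolSL2 A B C s) (ht : t ∈ s)
    (hF2 : sl2F2 (A t) (B t) (C t) = 0) :
    ∃ d < 0, HasDerivAt (fun t => sl2F2 (A t) (B t) (C t)) d t := by
  obtain ⟨⟨hA, hB, hC⟩, hA', hB', hC'⟩ := hsol t ht
  have hCB : C t < B t := lt_of_sl2F2_nonpos hA hB.le hF2.le
  have hF3 : 0 < sl2F3 (A t) (B t) (C t) := sl2F3_pos hA.le hC.le hCB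
  have hF1_neg : sl2F1 (A t) (B t) (C t) < 0 := by
    linarith [sl2F1_add_sl2F2_neg hA.le hC.le hCB]
  have hgrad : 0 < 3 * B t - C t + A t := by linarith
  have hcoeff : 0 < 4 * B t * (3 * B t - C t + A t) * sl2F3 (A t) (B t) (C t) /
      (A t * B t * C t) ^ 2 := by positivity
  refine ⟨_, mul_neg_of_pos_of_neg hcoeff hF1_neg,
    (hasDerivAt_sl2F2 hA' hB' hC').congr_deriv ?_⟩
  rw [hF2]
  ring

theorem sl2F1_neg_and_sl2F2_neg {t₀ T : ℝ} (hsol : IsSolSL2 A B C (Ico t₀ T))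
    (hF1 : sl2F1 (A t₀) (B t₀) (C t₀) < 0) (hF2 : sl2F2 (A t₀) (B t₀) (C t₀) < 0)
    (ht : t ∈ Ico t₀ T) :
    sl2F1 (A t) (B t) (C t) < 0 ∧ sl2F2 (A t) (B t) (C t) < 0 := by
  have hneg := forall_neg_of_hasDerivWithinAt_neg_of_eq_zero
    (f := ![fun t => sl2F1 (A t) (B t) (C t), fun t => sl2F2 (A t) (B t) (C t)])
    (Fin.forall_fin_two.2 ⟨hsol.continuousOn_sl2F1, hsol.continuousOn_sl2F2⟩)
    (Fin.forall_fin_two.2 ⟨hF1, hF2⟩) ?inward t ht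
  case inward =>
    refine fun τ hτ hnonpos => Fin.forall_fin_two.2 ⟨fun hzero => ?_, fun hzero => ?_⟩
    · obtain ⟨d, hd, hderiv⟩ :=
        hsol.exists_neg_hasDerivAt_sl2F1 (Ioo_subset_Ico_self hτ) hzero (hnonpos 1)
      exact ⟨d, hd, hderiv.hasDerivWithinAt⟩
    · obtain ⟨d, hd, hderiv⟩ :=
        hsol.exists_neg_hasDerivAt_sl2F2 (Ioo_subset_Ico_self hτ) hzero
      exact ⟨d, hd, hderiv.hasDerivWithinAt⟩
  exact Fin.forall_fin_two.1 hneg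

end IsSolSL2

/-- Along a positive solution of the `SL(2,ℝ)` negative cross curvature flow on `[0, T)`
with `B0 > C0 > 0` and `A0 > 0`: if the initial data satisfies `F1(0) < 0` and
`F2(0) < 0` (equivalently, the ratios `a = A/B`, `c = C/B` satisfy
`a < 1 - c + 2√(1-c)` and `a > (1/3)(2√(1-c+c²) - 1 - c)` at `t = 0`), then
`F1 < 0` and `F2 < 0` for all `t ∈ [0, T)`. -/
theorem sl2_F1F2_negative_preserved
    (T A0 B0 C0 : ℝ) (hT : 0 < T)
    (hA0 : 0 < A0) (hC0 : 0 < C0) (hB0C0 : B0 > C0)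
    (A B C : ℝ → ℝ)
    (hinitA : A 0 = A0) (hinitB : B 0 = B0) (hinitC : C 0 = C0)
    (hsol : IsSolSL2 A B C (Set.Ico (0 : ℝ) T))
    (hF2_0 : A0 / B0 < 1 - C0 / B0 + 2 * Real.sqrt (1 - C0 / B0))
    (hF1_0 : A0 / B0 >
      1 / 3 * (2 * Real.sqrt (1 - C0 / B0 + (C0 / B0) ^ 2) - 1 - C0 / B0)) :
    ∀ t ∈ Set.Ico (0 : ℝ) T,
      sl2F1 (A t) (B t) (C t) < 0 ∧ sl2F2 (A t) (B t) (C t) < 0 := by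
  subst hinitA hinitB hinitC
  have hB0 : 0 < B 0 := hC0.trans hB0C0
  intro t ht
  exact hsol.sl2F1_neg_and_sl2F2_neg ((sl2F1_neg_iff hA0.le hB0 hC0.le).2 hF1_0)
    ((sl2F2_neg_iff hA0 hB0 hC0.le hB0C0.le).2 hF2_0) ht
end

section
/- Let A, B, C be a maximal positive solution of the SL(2,ℝ) negative cross curvature flow ODE system with B_0 > C_0 > 0, A_0 > 0, and suppose that at t = 0 the ratios a = A/B and c = C/B satisfy a ≥ 1 - c + 2 sqrt(1 - c) (equivalently F_2(0) ≥ 0). Then there exists a time t_1 > 0 in the interval of existence at which F_1(t_1) < 0 and F_2(t_1) < 0; i.e., the condition F_2 ≥ 0 cannot persist for the whole interval of existence. -/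
/-- A maximal solution of the `SL(2,ℝ)` system on `{t | 0 ≤ t, t < T}` (`T ∈ (0,∞]` an
extended real): a solution admitting no extension to a strictly larger interval. -/
def IsMaxSolSL2 (A B C : ℝ → ℝ) (T : EReal) : Prop :=
  IsSolSL2 A B C {t : ℝ | 0 ≤ t ∧ (t : EReal) < T} ∧
  ∀ (A' B' C' : ℝ → ℝ) (T' : EReal), T < T' →
    IsSolSL2 A' B' C' {t : ℝ | 0 ≤ t ∧ (t : EReal) < T'} →
    ¬ (∀ t : ℝ, 0 ≤ t → (t : EReal) < T → A' t = A t ∧ B' t = B t ∧ C' t = C t)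

/-!
Suppose the conclusion fails. Since `B - C` solves a linear equation, `B > C` persists. As
`F1 + F2 < 0` whenever `B > C`, the function `F2 - F1` can vanish only where `F1` and `F2` are both
negative; so it stays positive and `F2 ≥ 0` throughout. In this regime `A` decreases while `C` and
`B - C` increase, and `F2 = (A - (B - C))² - 4 B (B - C) ≥ 0` forces `A > B - C` and
`A² ≥ 4 B (B - C)`. The solution is therefore confined to a compact box in the positive octant, so
maximality makes it immortal. But `B' ≥ 4 A² / (B C²)`, which is bounded below on that box by a
positive constant, contradicting the boundedness of `B`.
-/

open Set Filter Topology

section Calculus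

variable {E : Type*} [NormedAddCommGroup E] [NormedSpace ℝ E]

theorem forall_pos_of_forall_ne_zero {X : Type*} [TopologicalSpace X] {f : X → ℝ} {s : Set X}
    (hs : IsPreconnected s) (hf : ContinuousOn f s) (hne : ∀ t ∈ s, f t ≠ 0) {a : X} (ha : a ∈ s)
    (hpos : 0 < f a) : ∀ t ∈ s, 0 < f t := by
  intro t ht
  by_contra! hle
  obtain ⟨r, hr, hr0⟩ := hs.intermediate_value ht ha hf ⟨hle, hpos.le⟩
  exact hne r hr hr0

theorem ne_zero_of_hasDerivAt_smul {u : ℝ → E} {g : ℝ → ℝ} {a b : ℝ} (hab : a ≤ b)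
    (hg : ContinuousOn g (Icc a b)) (hu : ∀ t ∈ Icc a b, HasDerivAt u (g t • u t) t)
    (ha : u a ≠ 0) : u b ≠ 0 := by
  intro hb
  obtain ⟨K, hK⟩ := isCompact_Icc.exists_bound_of_continuousOn hg
  have hlip : ∀ t ∈ Ioc a b, LipschitzOnWith K.toNNReal (fun x : E => g t • x) univ := by
    refine fun t ht => ((lipschitzWith_smul (g t)).weaken ?_).lipschitzOnWith
    exact NNReal.le_toNNReal_of_coe_le (hK t (Ioc_subset_Icc_self ht))
  refine ha (ODE_solution_unique_of_mem_Icc_left (g := fun _ => 0) hlip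
    (HasDerivAt.continuousOn hu) (fun t ht => (hu t (Ioc_subset_Icc_self ht)).hasDerivWithinAt)
    (fun _ _ => mem_univ _) continuousOn_const (fun t _ => ?_) (fun _ _ => mem_univ _) hb
    (left_mem_Icc.2 hab))
  simpa using hasDerivWithinAt_const t (Iic t) (0 : E)

theorem pos_of_hasDerivAt_mul {u g : ℝ → ℝ} {a b : ℝ} (hab : a ≤ b)
    (hg : ContinuousOn g (Icc a b)) (hu : ∀ t ∈ Icc a b, HasDerivAt u (g t * u t) t)
    (ha : 0 < u a) : 0 < u b := by
  refine forall_pos_of_forall_ne_zero isPreconnected_Icc (HasDerivAt.continuousOn hu)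
    (fun t ht => ?_) (left_mem_Icc.2 hab) ha b (right_mem_Icc.2 hab)
  have hsub : Icc a t ⊆ Icc a b := Icc_subset_Icc_right ht.2
  exact ne_zero_of_hasDerivAt_smul ht.1 (hg.mono hsub) (fun r hr => hu r (hsub hr)) ha.ne'

theorem monotoneOn_of_hasDerivAt_nonneg {s : Set ℝ} (hs : Convex ℝ s) {f f' : ℝ → ℝ}
    (hf : ∀ t ∈ s, HasDerivAt f (f' t) t) (hf' : ∀ t ∈ s, 0 ≤ f' t) : MonotoneOn f s :=
  monotoneOn_of_hasDerivWithinAt_nonneg hs (HasDerivAt.continuousOn hf)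
    (fun t ht => (hf t (interior_subset ht)).hasDerivWithinAt)
    (fun t ht => hf' t (interior_subset ht))

theorem tendsto_atTop_of_le_hasDerivAt {f f' : ℝ → ℝ} {a κ : ℝ} (hκ : 0 < κ)
    (hf : ∀ t ∈ Ici a, HasDerivAt f (f' t) t) (hf' : ∀ t ∈ Ici a, κ ≤ f' t) :
    Tendsto f atTop atTop := by
  have hmono : MonotoneOn (fun t => f t - κ * t) (Ici a) :=
    monotoneOn_of_hasDerivAt_nonneg (convex_Ici a)
      (fun t ht => (hf t ht).sub ((hasDerivAt_id t).const_mul κ))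
      (fun t ht => by simpa using hf' t ht)
  have hlinear : Tendsto (fun t => f a - κ * a + κ * t) atTop atTop :=
    tendsto_atTop_add_const_left _ _ (tendsto_id.const_mul_atTop hκ)
  refine tendsto_atTop_mono' _ ?_ hlinear
  filter_upwards [eventually_ge_atTop a] with t ht
  linarith [hmono self_mem_Ici ht ht]

theorem exists_tendsto_nhdsWithin_of_uniformContinuousOn {X Y : Type*} [UniformSpace X]
    [UniformSpace Y] [CompleteSpace Y] {f : X → Y} {s : Set X} (hf : UniformContinuousOn f s)
    {x : X} (hx : x ∈ closure s) : ∃ y, Tendsto f (𝓝[s] x) (𝓝 y) := by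
  have : (𝓝[s] x).NeBot := mem_closure_iff_nhdsWithin_neBot.1 hx
  refine cauchy_map_iff_exists_tendsto.1 (cauchy_map_iff'.2 (hf.mono_left (le_inf ?_ ?_)))
  · exact (Filter.prod_mono inf_le_left inf_le_left).trans
      (nhds_prod_eq.symm.trans_le (nhds_le_uniformity x))
  · exact le_principal_iff.2 (prod_mem_prod self_mem_nhdsWithin self_mem_nhdsWithin)

theorem exists_tendsto_nhdsLT_of_norm_hasDerivAt_le [CompleteSpace E] {y y' : ℝ → E} {a T M : ℝ}
    (haT : a < T) (hy : ∀ t ∈ Ioo a T, HasDerivAt y (y' t) t)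
    (hM : ∀ t ∈ Ioo a T, ‖y' t‖ ≤ M) : ∃ x, Tendsto y (𝓝[<] T) (𝓝 x) := by
  have hlip : LipschitzOnWith M.toNNReal y (Ioo a T) :=
    (convex_Ioo a T).lipschitzOnWith_of_nnnorm_hasDerivWithin_le
      (fun t ht => (hy t ht).hasDerivWithinAt)
      (fun t ht => NNReal.le_toNNReal_of_coe_le (hM t ht))
  rw [← nhdsWithin_Ioo_eq_nhdsLT haT]
  refine exists_tendsto_nhdsWithin_of_uniformContinuousOn hlip.uniformContinuousOn ?_
  rw [closure_Ioo haT.ne]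
  exact right_mem_Icc.2 haT.le

theorem hasDerivAt_ite_lt {y y' α : ℝ → E} {e : E} {a T : ℝ} (haT : a < T)
    (hy : ∀ t ∈ Ioo a T, HasDerivAt y (y' t) t) (hlim : Tendsto y (𝓝[<] T) (𝓝 (α T)))
    (hlim' : Tendsto y' (𝓝[<] T) (𝓝 e)) (hα : HasDerivWithinAt α e (Ici T) T) :
    HasDerivAt (fun t => if t < T then y t else α t) e T := by
  set z : ℝ → E := fun t => if t < T then y t else α t
  have hzy : EqOn z y (Iio T) := fun t ht => if_pos ht
  have hzα : EqOn z α (Ici T) := fun t ht => if_neg (not_lt.2 ht)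
  have hz : ∀ t ∈ Ioo a T, HasDerivAt z (y' t) t := fun t ht =>
    (hy t ht).congr_of_eventuallyEq (hzy.eventuallyEq_of_mem (Iio_mem_nhds ht.2))
  have hIoo : Ioo a T ∈ 𝓝[<] T := Ioo_mem_nhdsLT haT
  have hzlim : Tendsto z (𝓝[<] T) (𝓝 (z T)) := by
    rw [hzα self_mem_Ici]
    exact hlim.congr' hzy.symm.eventuallyEq_nhdsWithin
  have hleft : HasDerivWithinAt z e (Iic T) T :=
    hasDerivWithinAt_Iic_of_tendsto_deriv
      (fun t ht => (hz t ht).differentiableAt.differentiableWithinAt)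
      (hzlim.mono_left (nhdsWithin_mono _ Ioo_subset_Iio_self)) hIoo
      (hlim'.congr' (by filter_upwards [hIoo] with t ht using (hz t ht).deriv.symm))
  have hright : HasDerivWithinAt z e (Ici T) T := hα.congr hzα (hzα self_mem_Ici)
  simpa only [Iic_union_Ici, hasDerivWithinAt_univ] using hleft.union hright

variable [CompleteSpace E] {v : E → E} {U K : Set E} {y : ℝ → E} {a T : ℝ}

theorem exists_solution_extension_of_tendsto {x : E} (hU : IsOpen U) (hv : ContDiffOn ℝ 1 v U)
    (haT : a < T) (hy : ∀ t ∈ Ico a T, y t ∈ U ∧ HasDerivAt y (v (y t)) t) (hx : x ∈ U)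
    (hlim : Tendsto y (𝓝[<] T) (𝓝 x)) :
    ∃ T' > T, ∃ z : ℝ → E, EqOn z y (Iio T) ∧
      ∀ t ∈ Ico a T', z t ∈ U ∧ HasDerivAt z (v (z t)) t := by
  have hvx : ContDiffAt ℝ 1 v x := hv.contDiffAt (hU.mem_nhds hx)
  obtain ⟨α, rfl, ε, hε, hα⟩ :=
    hvx.exists_forall_mem_closedBall_exists_eq_forall_mem_Ioo_hasDerivAt₀ T
  have hαT : HasDerivAt α (v (α T)) T := hα T ⟨by linarith, by linarith⟩
  have hev : ∀ᶠ t in 𝓝 T, α t ∈ U ∧ HasDerivAt α (v (α t)) t :=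
    (hαT.continuousAt.eventually_mem (hU.mem_nhds hx)).and
      (eventually_of_mem (Ioo_mem_nhds (by linarith) (by linarith)) hα)
  obtain ⟨T', hTT', hαT'⟩ :=
    mem_nhdsGE_iff_exists_Ico_subset.1 (mem_nhdsWithin_of_mem_nhds hev)
  refine ⟨T', hTT', fun t => if t < T then y t else α t, fun t ht => if_pos ht, fun t ht => ?_⟩
  rcases lt_trichotomy t T with hlt | rfl | hgt
  · simp only [if_pos hlt]
    have ht' := hy t ⟨ht.1, hlt⟩
    refine ⟨ht'.1, ht'.2.congr_of_eventuallyEq ?_⟩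
    filter_upwards [Iio_mem_nhds hlt] with r hr using if_pos hr
  · simp only [lt_irrefl, if_false]
    exact ⟨hx, hasDerivAt_ite_lt haT (fun r hr => (hy r (Ioo_subset_Ico_self hr)).2) hlim
      (hvx.continuousAt.tendsto.comp hlim) hαT.hasDerivWithinAt⟩
  · simp only [if_neg hgt.not_gt]
    have ht' := hαT' ⟨hgt.le, ht.2⟩
    refine ⟨ht'.1, ht'.2.congr_of_eventuallyEq ?_⟩
    filter_upwards [Ioi_mem_nhds hgt] with r hr using if_neg (not_lt.2 (le_of_lt hr))

theorem exists_solution_extension_of_mem_isCompact (hU : IsOpen U) (hv : ContDiffOn ℝ 1 v U)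
    (hK : IsCompact K) (hKU : K ⊆ U) (haT : a < T)
    (hy : ∀ t ∈ Ico a T, y t ∈ K ∧ HasDerivAt y (v (y t)) t) :
    ∃ T' > T, ∃ z : ℝ → E, EqOn z y (Iio T) ∧
      ∀ t ∈ Ico a T', z t ∈ U ∧ HasDerivAt z (v (z t)) t := by
  obtain ⟨M, hM⟩ := hK.exists_bound_of_continuousOn (hv.continuousOn.mono hKU)
  have hy' : ∀ t ∈ Ioo a T, y t ∈ K ∧ HasDerivAt y (v (y t)) t :=
    fun t ht => hy t (Ioo_subset_Ico_self ht)
  obtain ⟨x, hx⟩ := exists_tendsto_nhdsLT_of_norm_hasDerivAt_le haT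
    (fun t ht => (hy' t ht).2) (fun t ht => hM (y t) (hy' t ht).1)
  have hxK : x ∈ K := hK.isClosed.mem_of_tendsto hx
    (eventually_of_mem (Ioo_mem_nhdsLT haT) fun t ht => (hy' t ht).1)
  exact exists_solution_extension_of_tendsto hU hv haT
    (fun t ht => (hy t ht).imp_left (@hKU _)) (hKU hxK) hx

end Calculus

section Algebra

variable {a b c : ℝ}

theorem sl2F2_eq (a b c : ℝ) : sl2F2 a b c = (a - (b - c)) ^ 2 - 4 * b * (b - c) := by
  unfold sl2F2
  ring

theorem sq_lt_sl2F3 (ha : 0 < a) (hc : 0 < c) (hcb : c < b) : a ^ 2 < sl2F3 a b c := by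
  calc a ^ 2 < a ^ 2 + (b - c) * (b + 3 * c + 2 * a) :=
        lt_add_of_pos_right _ (mul_pos (sub_pos.2 hcb) (by linarith))
    _ = sl2F3 a b c := by unfold sl2F3; ring

theorem sl2F1_add_sl2F2_lt (ha : 0 < a) (hc : 0 < c) (hcb : c < b) :
    sl2F1 a b c + sl2F2 a b c < -2 * a ^ 2 := by
  have hb : 0 < b := hc.trans hcb
  calc sl2F1 a b c + sl2F2 a b c = -2 * a ^ 2 - (2 * ((b - c) * (b + c)) + 4 * (a * b)) := by
        unfold sl2F1 sl2F2
        ring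
    _ < -2 * a ^ 2 := by
        linarith [mul_pos (sub_pos.2 hcb) (add_pos hb hc), mul_pos ha hb]

theorem sl2F1_lt_of_sl2F2_nonneg (ha : 0 < a) (hc : 0 < c) (hcb : c < b)
    (hF2 : 0 ≤ sl2F2 a b c) : sl2F1 a b c < -2 * a ^ 2 := by
  linarith [sl2F1_add_sl2F2_lt ha hc hcb]

theorem sub_lt_of_sl2F2_nonneg (ha : 0 < a) (hc : 0 < c) (hcb : c < b)
    (hF2 : 0 ≤ sl2F2 a b c) : b - c < a := by
  have hgap : 0 < b - c := sub_pos.2 hcb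
  by_contra! hle
  have hsq : (a - (b - c)) ^ 2 ≤ (b - c) ^ 2 := sq_le_sq' (by linarith) (by linarith)
  have hlt : (b - c) ^ 2 < 4 * b * (b - c) := by
    rw [sq]
    exact mul_lt_mul_of_pos_right (by linarith) hgap
  linarith [sl2F2_eq a b c]

theorem four_mul_mul_sub_le_sq_of_sl2F2_nonneg (ha : 0 < a) (hc : 0 < c) (hcb : c < b)
    (hF2 : 0 ≤ sl2F2 a b c) : 4 * b * (b - c) ≤ a ^ 2 := by
  have hlt := sub_lt_of_sl2F2_nonneg ha hc hcb hF2
  have hsq : (a - (b - c)) ^ 2 ≤ a ^ 2 := sq_le_sq' (by linarith) (by linarith)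
  linarith [sl2F2_eq a b c]

theorem sl2F2_nonneg_of_le_div (hb : 0 < b) (hcb : c ≤ b)
    (h : 1 - c / b + 2 * √(1 - c / b) ≤ a / b) : 0 ≤ sl2F2 a b c := by
  have hx : 0 ≤ 1 - c / b := sub_nonneg.2 ((div_le_one hb).2 hcb)
  have hsq : 4 * (1 - c / b) ≤ (a / b - (1 - c / b)) ^ 2 :=
    calc 4 * (1 - c / b) = (2 * √(1 - c / b)) ^ 2 := by rw [mul_pow, Real.sq_sqrt hx]; norm_num
      _ ≤ (a / b - (1 - c / b)) ^ 2 := by gcongr; linarith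
  have hF2 : sl2F2 a b c = b ^ 2 * ((a / b - (1 - c / b)) ^ 2 - 4 * (1 - c / b)) := by
    rw [sl2F2_eq]
    field_simp
  rw [hF2]
  exact mul_nonneg (sq_nonneg b) (sub_nonneg.2 hsq)

theorem le_deriv_B_of_sl2F2_nonneg (ha : 0 < a) (hc : 0 < c) (hcb : c < b)
    (hF2 : 0 ≤ sl2F2 a b c) :
    4 * a ^ 2 / (b * c ^ 2) ≤ -2 * b * sl2F3 a b c * sl2F1 a b c / (a * b * c) ^ 2 := by
  have hb : 0 < b := hc.trans hcb
  have hF1 : 2 * a ^ 2 ≤ -sl2F1 a b c := by linarith [sl2F1_lt_of_sl2F2_nonneg ha hc hcb hF2]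
  have hF3 : a ^ 2 ≤ sl2F3 a b c := (sq_lt_sl2F3 ha hc hcb).le
  have hF3' : 0 ≤ sl2F3 a b c := (sq_nonneg a).trans hF3
  calc 4 * a ^ 2 / (b * c ^ 2) = 2 * b * a ^ 2 * (2 * a ^ 2) / (a * b * c) ^ 2 := by
        field_simp
        norm_num
    _ ≤ 2 * b * sl2F3 a b c * -sl2F1 a b c / (a * b * c) ^ 2 := by gcongr
    _ = -2 * b * sl2F3 a b c * sl2F1 a b c / (a * b * c) ^ 2 := by ring

end Algebra

/-- The open positive octant of `ℝ³`, the phase space of the system. -/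
def posOctant : Set (ℝ × ℝ × ℝ) := Ioi 0 ×ˢ Ioi 0 ×ˢ Ioi 0

theorem isOpen_posOctant : IsOpen posOctant := isOpen_Ioi.prod (isOpen_Ioi.prod isOpen_Ioi)

/-- The right-hand side of the `SL(2,ℝ)` system as a vector field on `ℝ³`, which lets the general
theory of autonomous equations apply. Outside `posOctant` it may take junk values. -/
noncomputable def sl2Field (p : ℝ × ℝ × ℝ) : ℝ × ℝ × ℝ :=
  (-2 * p.1 * sl2F2 p.1 p.2.1 p.2.2 * sl2F3 p.1 p.2.1 p.2.2 / (p.1 * p.2.1 * p.2.2) ^ 2,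
    -2 * p.2.1 * sl2F3 p.1 p.2.1 p.2.2 * sl2F1 p.1 p.2.1 p.2.2 / (p.1 * p.2.1 * p.2.2) ^ 2,
    -2 * p.2.2 * sl2F1 p.1 p.2.1 p.2.2 * sl2F2 p.1 p.2.1 p.2.2 / (p.1 * p.2.1 * p.2.2) ^ 2)

theorem contDiffOn_sl2Field : ContDiffOn ℝ 1 sl2Field posOctant := by
  have hne : ∀ p ∈ posOctant, (p.1 * p.2.1 * p.2.2) ^ 2 ≠ 0 := fun p hp =>
    pow_ne_zero 2 (mul_pos (mul_pos hp.1 hp.2.1) hp.2.2).ne'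
  unfold sl2Field sl2F1 sl2F2 sl2F3
  exact (ContDiffOn.div (by fun_prop) (by fun_prop) hne).prodMk
    ((ContDiffOn.div (by fun_prop) (by fun_prop) hne).prodMk
      (ContDiffOn.div (by fun_prop) (by fun_prop) hne))

theorem isSolSL2_iff_hasDerivAt_sl2Field {A B C : ℝ → ℝ} {s : Set ℝ} :
    IsSolSL2 A B C s ↔ ∀ t ∈ s, (A t, B t, C t) ∈ posOctant ∧
      HasDerivAt (fun r => (A r, B r, C r)) (sl2Field (A t, B t, C t)) t :=
  forall₂_congr fun _ _ => and_congr_right fun _ =>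
    ⟨fun ⟨hA, hB, hC⟩ => hA.prodMk (hB.prodMk hC), fun h => ⟨h.fst, h.snd.fst, h.snd.snd⟩⟩

theorem ordConnected_setOf_nonneg_and_coe_lt (T : EReal) :
    OrdConnected {t : ℝ | 0 ≤ t ∧ (t : EReal) < T} :=
  ordConnected_Ici.inter (ordConnected_Iio.preimage_mono EReal.coe_strictMono.monotone)

theorem IsMaxSolSL2.eq_top_of_mem_isCompact {A B C : ℝ → ℝ} {T : EReal}
    (h : IsMaxSolSL2 A B C T) (hT : 0 < T) {K : Set (ℝ × ℝ × ℝ)} (hK : IsCompact K)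
    (hKpos : K ⊆ posOctant)
    (hmem : ∀ t : ℝ, 0 ≤ t → (t : EReal) < T → (A t, B t, C t) ∈ K) : T = ⊤ := by
  induction T with
  | bot => exact absurd hT not_lt_bot
  | top => rfl
  | coe T =>
    obtain ⟨hsol, hmax⟩ := h
    rw [isSolSL2_iff_hasDerivAt_sl2Field] at hsol
    simp only [EReal.coe_lt_coe_iff] at hsol hmem hmax
    obtain ⟨T', hTT', z, hzy, hz⟩ := exists_solution_extension_of_mem_isCompact
      isOpen_posOctant contDiffOn_sl2Field hK hKpos (EReal.coe_pos.1 hT)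
      (fun t ht => ⟨hmem t ht.1 ht.2, (hsol t ht).2⟩)
    refine absurd (fun t _ htT => ?_) (hmax (fun t => (z t).1) (fun t => (z t).2.1)
      (fun t => (z t).2.2) T' (EReal.coe_lt_coe_iff.2 hTT')
      (isSolSL2_iff_hasDerivAt_sl2Field.2 fun t ht => hz t ⟨ht.1, EReal.coe_lt_coe_iff.1 ht.2⟩))
    simp only [hzy htT, and_self]

/-- The logarithmic growth rate of the gap `B - C` along a solution; it comes from
`B F3 - C F2 = (B - C) (A² + B² + C² + 6BC + 2A(B + C))`. -/
noncomputable def sl2GapRate (a b c : ℝ) : ℝ :=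
  -2 * sl2F1 a b c * (a ^ 2 + b ^ 2 + c ^ 2 + 6 * b * c + 2 * a * (b + c)) / (a * b * c) ^ 2

namespace IsSolSL2

variable {A B C : ℝ → ℝ} {s : Set ℝ}

theorem continuousOn (h : IsSolSL2 A B C s) :
    ContinuousOn A s ∧ ContinuousOn B s ∧ ContinuousOn C s :=
  ⟨HasDerivAt.continuousOn fun t ht => (h t ht).2.1,
    HasDerivAt.continuousOn fun t ht => (h t ht).2.2.1,
    HasDerivAt.continuousOn fun t ht => (h t ht).2.2.2⟩

theorem hasDerivAt_sub (h : IsSolSL2 A B C s) {t : ℝ} (ht : t ∈ s) :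
    HasDerivAt (fun r => B r - C r) (sl2GapRate (A t) (B t) (C t) * (B t - C t)) t := by
  obtain ⟨-, -, hB, hC⟩ := h t ht
  refine (hB.sub hC).congr_deriv ?_
  unfold sl2GapRate sl2F1 sl2F2 sl2F3
  ring

theorem continuousOn_sl2GapRate (h : IsSolSL2 A B C s) :
    ContinuousOn (fun t => sl2GapRate (A t) (B t) (C t)) s := by
  obtain ⟨hA, hB, hC⟩ := h.continuousOn
  unfold sl2GapRate sl2F1
  refine ContinuousOn.div (by fun_prop) (by fun_prop) fun t ht => ?_
  obtain ⟨⟨hAt, hBt, hCt⟩, -⟩ := h t ht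
  exact pow_ne_zero 2 (mul_pos (mul_pos hAt hBt) hCt).ne'

theorem C_lt_B (h : IsSolSL2 A B C s) (hs : OrdConnected s) {t₀ t : ℝ} (ht₀ : t₀ ∈ s)
    (ht : t ∈ s) (hle : t₀ ≤ t) (hCB : C t₀ < B t₀) : C t < B t :=
  have hsub : Icc t₀ t ⊆ s := hs.out ht₀ ht
  sub_pos.1 (pos_of_hasDerivAt_mul (u := fun r => B r - C r) hle
    (h.continuousOn_sl2GapRate.mono hsub)
    (fun _ hr => h.hasDerivAt_sub (hsub hr)) (sub_pos.2 hCB))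

theorem sl2F2_nonneg (h : IsSolSL2 A B C s) (hs : IsPreconnected s) (hCB : ∀ t ∈ s, C t < B t)
    (hF : ∀ t ∈ s, 0 ≤ sl2F1 (A t) (B t) (C t) ∨ 0 ≤ sl2F2 (A t) (B t) (C t))
    {t₀ : ℝ} (ht₀ : t₀ ∈ s) (hF2 : 0 ≤ sl2F2 (A t₀) (B t₀) (C t₀)) :
    ∀ t ∈ s, 0 ≤ sl2F2 (A t) (B t) (C t) := by
  have hsum : ∀ t ∈ s, sl2F1 (A t) (B t) (C t) + sl2F2 (A t) (B t) (C t) < 0 := by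
    intro t ht
    obtain ⟨⟨hA, -, hC⟩, -⟩ := h t ht
    linarith [sl2F1_add_sl2F2_lt hA hC (hCB t ht), sq_nonneg (A t)]
  have hcont : ContinuousOn
      (fun t => sl2F2 (A t) (B t) (C t) - sl2F1 (A t) (B t) (C t)) s := by
    obtain ⟨hA, hB, hC⟩ := h.continuousOn
    unfold sl2F1 sl2F2
    fun_prop
  have hdiff : ∀ t ∈ s, 0 < sl2F2 (A t) (B t) (C t) - sl2F1 (A t) (B t) (C t) := by
    refine forall_pos_of_forall_ne_zero hs hcont (fun t ht heq => ?_) ht₀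
      (by linarith [hsum t₀ ht₀])
    rcases hF t ht with hF1 | hF2 <;> linarith [hsum t ht]
  intro t ht
  rcases hF t ht with hF1 | hF2 <;> linarith [hdiff t ht]

end IsSolSL2

/-- Solutions of the `SL(2,ℝ)` system with `C < B` and `F2 ≥ 0` throughout `s`: the regime whose
persistence is to be refuted. Here `F1 < 0 < F3`. -/
structure IsF2NonnegSolSL2 (A B C : ℝ → ℝ) (s : Set ℝ) : Prop where
  isSol : IsSolSL2 A B C s
  C_lt_B : ∀ t ∈ s, C t < B t
  F2_nonneg : ∀ t ∈ s, 0 ≤ sl2F2 (A t) (B t) (C t)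

namespace IsF2NonnegSolSL2

variable {A B C : ℝ → ℝ} {s : Set ℝ}

theorem F1_neg (h : IsF2NonnegSolSL2 A B C s) {t : ℝ} (ht : t ∈ s) :
    sl2F1 (A t) (B t) (C t) < 0 := by
  obtain ⟨⟨hA, -, hC⟩, -⟩ := h.isSol t ht
  linarith [sl2F1_lt_of_sl2F2_nonneg hA hC (h.C_lt_B t ht) (h.F2_nonneg t ht), sq_nonneg (A t)]

theorem F3_pos (h : IsF2NonnegSolSL2 A B C s) {t : ℝ} (ht : t ∈ s) :
    0 < sl2F3 (A t) (B t) (C t) := by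
  obtain ⟨⟨hA, -, hC⟩, -⟩ := h.isSol t ht
  exact (sq_nonneg (A t)).trans_lt (sq_lt_sl2F3 hA hC (h.C_lt_B t ht))

theorem antitoneOn_A (h : IsF2NonnegSolSL2 A B C s) (hs : Convex ℝ s) : AntitoneOn A s := by
  refine antitoneOn_of_hasDerivWithinAt_nonpos hs h.isSol.continuousOn.1
    (fun t ht => (h.isSol t (interior_subset ht)).2.1.hasDerivWithinAt) fun t ht => ?_
  replace ht := interior_subset ht
  refine div_nonpos_of_nonpos_of_nonneg ?_ (sq_nonneg _)
  linarith [mul_nonneg (mul_nonneg (h.isSol t ht).1.1.le (h.F2_nonneg t ht)) (h.F3_pos ht).le]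

theorem monotoneOn_C (h : IsF2NonnegSolSL2 A B C s) (hs : Convex ℝ s) : MonotoneOn C s := by
  refine monotoneOn_of_hasDerivAt_nonneg hs (fun t ht => (h.isSol t ht).2.2.2) fun t ht => ?_
  refine div_nonneg ?_ (sq_nonneg _)
  linarith [mul_nonneg (mul_nonneg (h.isSol t ht).1.2.2.le (neg_nonneg.2 (h.F1_neg ht).le))
    (h.F2_nonneg t ht)]

theorem monotoneOn_B_sub_C (h : IsF2NonnegSolSL2 A B C s) (hs : Convex ℝ s) :
    MonotoneOn (fun t => B t - C t) s := by
  refine monotoneOn_of_hasDerivAt_nonneg hs (fun t ht => h.isSol.hasDerivAt_sub ht) fun t ht => ?_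
  obtain ⟨⟨hA, hB, hC⟩, -⟩ := h.isSol t ht
  have hF1 : 0 ≤ -2 * sl2F1 (A t) (B t) (C t) := by linarith [h.F1_neg ht]
  have hrate : 0 ≤ sl2GapRate (A t) (B t) (C t) :=
    div_nonneg (mul_nonneg hF1 (by positivity)) (sq_nonneg _)
  exact mul_nonneg hrate (sub_pos.2 (h.C_lt_B t ht)).le

theorem mem_Icc (h : IsF2NonnegSolSL2 A B C s) (hs : Convex ℝ s) {t₀ t : ℝ} (ht₀ : t₀ ∈ s)
    (ht : t ∈ s) (hle : t₀ ≤ t) :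
    (A t, B t, C t) ∈ Icc (B t₀ - C t₀, B t₀ - C t₀, C t₀)
      (A t₀, A t₀ ^ 2 / (4 * (B t₀ - C t₀)), A t₀ ^ 2 / (4 * (B t₀ - C t₀))) := by
  obtain ⟨⟨hA, hB, hC⟩, -⟩ := h.isSol t ht
  have hCB := h.C_lt_B t ht
  have hgap₀ : 0 < B t₀ - C t₀ := sub_pos.2 (h.C_lt_B t₀ ht₀)
  have hgap : B t₀ - C t₀ ≤ B t - C t := h.monotoneOn_B_sub_C hs ht₀ ht hle
  have hA₀ : A t ≤ A t₀ := h.antitoneOn_A hs ht₀ ht hle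
  have hC₀ : C t₀ ≤ C t := h.monotoneOn_C hs ht₀ ht hle
  have hgapA : B t - C t < A t := sub_lt_of_sl2F2_nonneg hA hC hCB (h.F2_nonneg t ht)
  have hBle : B t ≤ A t₀ ^ 2 / (4 * (B t₀ - C t₀)) := by
    rw [le_div_iff₀ (by positivity)]
    calc B t * (4 * (B t₀ - C t₀)) ≤ B t * (4 * (B t - C t)) := by gcongr
      _ = 4 * B t * (B t - C t) := by ring
      _ ≤ A t ^ 2 := four_mul_mul_sub_le_sq_of_sl2F2_nonneg hA hC hCB (h.F2_nonneg t ht)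
      _ ≤ A t₀ ^ 2 := by gcongr
  exact ⟨⟨by linarith, by linarith, hC₀⟩, ⟨hA₀, hBle, hCB.le.trans hBle⟩⟩

theorem eq_top_of_isMaxSolSL2 {T : EReal}
    (h : IsF2NonnegSolSL2 A B C {t : ℝ | 0 ≤ t ∧ (t : EReal) < T})
    (hmax : IsMaxSolSL2 A B C T) (hT : 0 < T) : T = ⊤ := by
  have h0 : (0 : ℝ) ∈ {t : ℝ | 0 ≤ t ∧ (t : EReal) < T} := ⟨le_rfl, hT⟩
  have hgap : 0 < B 0 - C 0 := sub_pos.2 (h.C_lt_B 0 h0)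
  have hC : 0 < C 0 := (h.isSol 0 h0).1.2.2
  exact hmax.eq_top_of_mem_isCompact hT isCompact_Icc
    (fun p hp => ⟨hgap.trans_le hp.1.1, hgap.trans_le hp.1.2.1, hC.trans_le hp.1.2.2⟩)
    fun t ht htT => h.mem_Icc (ordConnected_setOf_nonneg_and_coe_lt T).convex h0 ⟨ht, htT⟩ ht

theorem not_Ici (t₀ : ℝ) : ¬ IsF2NonnegSolSL2 A B C (Ici t₀) := by
  intro h
  set d := B t₀ - C t₀
  set M := A t₀ ^ 2 / (4 * d)
  have hbox : ∀ t ∈ Ici t₀, d ≤ A t ∧ B t ≤ M ∧ C t ≤ M := fun t ht =>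
    have hmem := h.mem_Icc (convex_Ici t₀) self_mem_Ici ht ht
    ⟨hmem.1.1, hmem.2.2⟩
  have hd : 0 < d := sub_pos.2 (h.C_lt_B t₀ self_mem_Ici)
  have hM : 0 < M := (h.isSol t₀ self_mem_Ici).1.2.1.trans_le (hbox t₀ self_mem_Ici).2.1
  have hB' : ∀ t ∈ Ici t₀, 4 * d ^ 2 / (M * M ^ 2) ≤
      -2 * B t * sl2F3 (A t) (B t) (C t) * sl2F1 (A t) (B t) (C t) / (A t * B t * C t) ^ 2 := by
    intro t ht
    obtain ⟨⟨hA, hB, hC⟩, -⟩ := h.isSol t ht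
    obtain ⟨hdA, hBM, hCM⟩ := hbox t ht
    calc 4 * d ^ 2 / (M * M ^ 2) ≤ 4 * A t ^ 2 / (B t * C t ^ 2) := by gcongr
      _ ≤ _ := le_deriv_B_of_sl2F2_nonneg hA hC (h.C_lt_B t ht) (h.F2_nonneg t ht)
  have hBtop : Tendsto B atTop atTop :=
    tendsto_atTop_of_le_hasDerivAt (by positivity) (fun t ht => (h.isSol t ht).2.2.1) hB'
  obtain ⟨t, hMB, ht⟩ := ((hBtop.eventually_gt_atTop M).and (eventually_ge_atTop t₀)).exists
  exact hMB.not_ge (hbox t ht).2.1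

end IsF2NonnegSolSL2

/-- For a maximal positive solution of the `SL(2,ℝ)` negative cross curvature flow with
`B0 > C0 > 0`, `A0 > 0` and initial ratios `a = A0/B0`, `c = C0/B0` satisfying
`a ≥ 1 - c + 2√(1-c)` (equivalently `F2(0) ≥ 0`): there is a time `t1 > 0` in the
interval of existence at which `F1(t1) < 0` and `F2(t1) < 0`; i.e. the condition
`F2 ≥ 0` cannot persist. -/
theorem sl2_F2_nonneg_not_persistent
    (A0 B0 C0 : ℝ) (hA0 : 0 < A0) (hC0 : 0 < C0) (hB0C0 : B0 > C0)
    (A B C : ℝ → ℝ) (T : EReal) (hT : 0 < T)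
    (hmax : IsMaxSolSL2 A B C T)
    (hinitA : A 0 = A0) (hinitB : B 0 = B0) (hinitC : C 0 = C0)
    (hF2_0 : A0 / B0 ≥ 1 - C0 / B0 + 2 * Real.sqrt (1 - C0 / B0)) :
    ∃ t1 : ℝ, 0 < t1 ∧ (t1 : EReal) < T ∧
      sl2F1 (A t1) (B t1) (C t1) < 0 ∧ sl2F2 (A t1) (B t1) (C t1) < 0 := by
  subst hinitA hinitB hinitC
  by_contra! hcon
  have hI := ordConnected_setOf_nonneg_and_coe_lt T
  have h0 : (0 : ℝ) ∈ {t : ℝ | 0 ≤ t ∧ (t : EReal) < T} := ⟨le_rfl, hT⟩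
  have hCB : ∀ t ∈ {t : ℝ | 0 ≤ t ∧ (t : EReal) < T}, C t < B t :=
    fun t ht => hmax.1.C_lt_B hI h0 ht ht.1 hB0C0
  have hF2_zero : 0 ≤ sl2F2 (A 0) (B 0) (C 0) :=
    sl2F2_nonneg_of_le_div (hC0.trans hB0C0) hB0C0.le hF2_0
  have hF : ∀ t ∈ {t : ℝ | 0 ≤ t ∧ (t : EReal) < T},
      0 ≤ sl2F1 (A t) (B t) (C t) ∨ 0 ≤ sl2F2 (A t) (B t) (C t) := by
    rintro t ⟨ht, htT⟩
    rcases ht.eq_or_lt with rfl | htpos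
    · exact .inr hF2_zero
    · exact (lt_or_ge _ 0).symm.imp_right (hcon t htpos htT)
  have hreg : IsF2NonnegSolSL2 A B C {t : ℝ | 0 ≤ t ∧ (t : EReal) < T} :=
    ⟨hmax.1, hCB, hmax.1.sl2F2_nonneg hI.isPreconnected hCB hF h0 hF2_zero⟩
  obtain rfl := hreg.eq_top_of_isMaxSolSL2 hmax hT
  exact IsF2NonnegSolSL2.not_Ici 0 (by simpa [Ici] using hreg)
end
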